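/- arXiv:2507.20661 — 11 statements merged into one kernel-verified Lean document; each statement's English description precedes it below -/
import Mathlib

section
/- Let d be a natural number, let W ⊆ ℝ × ℝ^d be an open set, and let f : ℝ × ℝ^d → ℝ be C^∞ on W (ContDiffOn ℝ ⊤ f W). Then the following are equivalent: (i) f(0, y) = 0 for every point (0, y) ∈ W; (ii) there exists g : ℝ × ℝ^d → ℝ which is C^∞ on W such that f(x, y) = x · g(x, y) for all (x, y) ∈ W. -/
/-!
Near a point of `{0} × E`, a function `f` that is zero on `{0} × E` satisfies
`f (x, y) = x • ∫ t in 0..1, ∂₁f (t x, y)`, and the integral is smooth in `(x, y)` by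
differentiation under the integral sign. Away from `{0} × E` the quotient `x⁻¹ • f (x, y)` is
visibly smooth. Both are the difference quotient `dslope (fun t ↦ f (t, y)) 0 x`, so there is
nothing to glue.
-/

open Set Filter MeasureTheory
open scoped Topology Manifold ContDiff Convolution

section

variable {E F G P : Type*} [NormedAddCommGroup E] [NormedSpace ℝ E]
  [NormedAddCommGroup F] [NormedSpace ℝ F]
  [NormedAddCommGroup P] [NormedSpace ℝ P] {n : ℕ∞}

theorem contDiffOn_smul_of_forall_notMem_eq_zero {X : Type*} [NormedAddCommGroup X]
    [NormedSpace ℝ X] {χ : X → ℝ} {ψ : X → F} {k s : Set X} {n : WithTop ℕ∞}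
    (hk : IsClosed k) (hχ : ContDiff ℝ n χ) (hχ_zero : ∀ x ∉ k, χ x = 0)
    (hψ : ∀ x ∈ k ∩ s, ContDiffAt ℝ n ψ x) : ContDiffOn ℝ n (fun x ↦ χ x • ψ x) s := by
  intro x hx
  by_cases hxk : x ∈ k
  · exact (hχ.contDiffAt.smul (hψ x ⟨hxk, hx⟩)).contDiffWithinAt
  · have hzero : (fun x ↦ χ x • ψ x) =ᶠ[𝓝 x] fun _ ↦ 0 := by
      filter_upwards [hk.isOpen_compl.mem_nhds hxk] with z hz
      rw [hχ_zero z hz, zero_smul]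
    exact (contDiffAt_const.congr_of_eventuallyEq hzero).contDiffWithinAt

theorem exists_contDiff_eqOn_one_of_subset_interior [NormedAddCommGroup G] [NormedSpace ℝ G]
    [FiniteDimensional ℝ G] {K k : Set G} (hK : IsClosed K) (hKk : K ⊆ interior k) :
    ∃ χ : G → ℝ, ContDiff ℝ n χ ∧ EqOn χ 1 K ∧ ∀ t ∉ k, χ t = 0 := by
  obtain ⟨χ, hχ_one, hχ_zero, -⟩ :=
    exists_contMDiffMap_one_nhds_of_subset_interior (n := n) 𝓘(ℝ, G) hK hKk
  exact ⟨χ, χ.contMDiff.contDiff, hχ_one.self_of_nhdsSet, hχ_zero⟩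

section ParametricIntegral

variable [NormedAddCommGroup G] [NormedSpace ℝ G] [MeasurableSpace G] [BorelSpace G]
  {μ : Measure G} {K : Set G}

theorem contDiffOn_setIntegral_of_forall_notMem_eq_zero [IsFiniteMeasureOnCompacts μ]
    (hK : IsCompact K) {k : Set G} (hk : IsCompact k) {U : Set P} (hU : IsOpen U)
    {φ : P → G → F} (hφ_zero : ∀ p ∈ U, ∀ t ∉ k, φ p t = 0)
    (hφ : ContDiffOn ℝ n ↿φ (U ×ˢ univ)) :
    ContDiffOn ℝ n (fun p ↦ ∫ t in K, φ p t ∂μ) U := by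
  have hind : LocallyIntegrable (K.indicator fun _ ↦ (1 : ℝ)) μ :=
    ((integrable_indicator_iff hK.measurableSet).2
      (integrableOn_const hK.measure_ne_top)).locallyIntegrable
  have hφ_neg : ContDiffOn ℝ n ↿(fun p t ↦ φ p (-t)) (U ×ˢ univ) :=
    hφ.comp (g := ↿φ) (f := fun q : P × G ↦ (q.1, -q.2)) (by fun_prop) fun _ hq ↦ ⟨hq.1, trivial⟩
  have hconv := contDiffOn_convolution_right_with_param_comp (ContinuousLinearMap.lsmul ℝ ℝ)
    (contDiffOn_const (c := (0 : G))) hU hk.neg (fun p t hp ht ↦ hφ_zero p hp (-t) ht) hind hφ_neg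
  refine hconv.congr fun p _ ↦ ?_
  simp only [convolution_def, zero_sub, neg_neg, ContinuousLinearMap.lsmul_apply,
    ← indicator_smul_apply_left, one_smul, integral_indicator hK.measurableSet]

theorem contDiffAt_setIntegral_of_isCompact [FiniteDimensional ℝ G] [IsFiniteMeasureOnCompacts μ]
    (hK : IsCompact K) {φ : P → G → F} {p₀ : P} (hφ : ∀ t ∈ K, ContDiffAt ℝ n ↿φ (p₀, t)) :
    ContDiffAt ℝ n (fun p ↦ ∫ t in K, φ p t ∂μ) p₀ := by
  -- Being `C^∞` at a point does not give a neighbourhood on which the function is `C^∞`,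
  -- whereas being `C^m` at a point is an open condition for finite `m`.
  have finite_order (m : ℕ) (hm : ∀ t ∈ K, ContDiffAt ℝ m ↿φ (p₀, t)) :
      ContDiffAt ℝ m (fun p ↦ ∫ t in K, φ p t ∂μ) p₀ := by
    have hopen : IsOpen {q | ContDiffAt ℝ m ↿φ q} :=
      isOpen_iff_mem_nhds.2 fun q hq ↦ ContDiffAt.eventually hq (by simp)
    obtain ⟨U, V, hU, hV, hpU, hKV, hUV⟩ := generalized_tube_lemma isCompact_singleton hK hopen
      (by rintro ⟨p, t⟩ ⟨rfl, ht⟩; exact hm t ht)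
    have : ProperSpace G := FiniteDimensional.proper_real G
    obtain ⟨k, hk, hKk, hkV⟩ := exists_compact_between hK hV hKV
    obtain ⟨χ, hχ, hχ_one, hχ_zero⟩ :=
      exists_contDiff_eqOn_one_of_subset_interior (n := m) hK.isClosed hKk
    have hcutoff : ContDiffOn ℝ m ↿(fun p t ↦ χ t • φ p t) (U ×ˢ univ) :=
      contDiffOn_smul_of_forall_notMem_eq_zero (χ := fun q : P × G ↦ χ q.2)
        (hk.isClosed.preimage continuous_snd) (hχ.comp contDiff_snd) (fun q ↦ hχ_zero q.2)
        fun q hq ↦ hUV ⟨hq.2.1, hkV hq.1⟩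
    have hint := contDiffOn_setIntegral_of_forall_notMem_eq_zero (μ := μ) hK hk hU
      (fun p _ t ht ↦ by rw [hχ_zero t ht, zero_smul]) hcutoff
    refine (hint.contDiffAt (hU.mem_nhds (hpU rfl))).congr_of_eventuallyEq (.of_forall fun p ↦ ?_)
    exact setIntegral_congr_fun hK.measurableSet fun t ht ↦ by simp [hχ_one ht]
  induction n with
  | top => exact contDiffAt_infty.2 fun m ↦ finite_order m fun t ht ↦ contDiffAt_infty.1 (hφ t ht) m
  | coe m => exact finite_order m hφ

end ParametricIntegral

theorem dslope_eq_integral_deriv [CompleteSpace F] {f : ℝ → F} {a b : ℝ}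
    (hf : ∀ t ∈ Icc (0 : ℝ) 1, ContDiffAt ℝ 1 f (a + t * (b - a))) :
    dslope f a b = ∫ t in Icc (0 : ℝ) 1, deriv f (a + t * (b - a)) := by
  rw [integral_Icc_eq_integral_Ioc, ← intervalIntegral.integral_of_le zero_le_one]
  rcases eq_or_ne b a with rfl | hba
  · simp
  have hderiv (t : ℝ) (ht : t ∈ Icc (0 : ℝ) 1) : ContinuousAt (deriv f) (a + t * (b - a)) :=
    ((hf t ht).continuousAt_fderiv one_ne_zero).clm_apply continuousAt_const
  have hcont : ContinuousOn (fun t : ℝ ↦ deriv f (a + t • (b - a))) (Icc 0 1) := fun t ht ↦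
    ((hderiv t ht).comp (f := fun t ↦ a + t * (b - a)) (by fun_prop)).continuousWithinAt
  have hftc : (b - a) • ∫ t in (0 : ℝ)..1, deriv f (a + t * (b - a)) = f b - f a := by
    simpa using intervalIntegral.integral_unitInterval_deriv_eq_sub hcont
      fun t ht ↦ ((hf t ht).differentiableAt one_ne_zero).hasDerivAt
  rw [← sub_smul_dslope f a b] at hftc
  exact (smul_right_injective F (sub_ne_zero.2 hba) hftc).symm

theorem deriv_comp_prodMk_eq_fderiv {f : ℝ × E → F} {x : ℝ} {y : E}
    (hf : DifferentiableAt ℝ f (x, y)) :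
    deriv (fun t ↦ f (t, y)) x = fderiv ℝ f (x, y) (1, 0) :=
  (hf.hasFDerivAt.comp_hasDerivAt x ((hasDerivAt_id x).prodMk (hasDerivAt_const x y))).deriv

theorem dslope_fst_eventuallyEq_integral_fderiv [CompleteSpace F] {f : ℝ × E → F} {a : ℝ} {y : E}
    (hf : ContDiffAt ℝ 1 f (a, y)) :
    (fun p : ℝ × E ↦ dslope (fun t ↦ f (t, p.2)) a p.1) =ᶠ[𝓝 (a, y)]
      fun p ↦ ∫ t in Icc (0 : ℝ) 1, fderiv ℝ f (a + t * (p.1 - a), p.2) (1, 0) := by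
  obtain ⟨r, hr, hball⟩ := Metric.eventually_nhds_iff_ball.1 (hf.eventually (by simp))
  filter_upwards [Metric.ball_mem_nhds _ hr] with p hp
  have hsegment (t : ℝ) (ht : t ∈ Icc (0 : ℝ) 1) :
      ContDiffAt ℝ 1 f (a + t * (p.1 - a), p.2) := by
    rw [Metric.mem_ball, Prod.dist_eq, max_lt_iff] at hp
    refine hball _ (max_lt (lt_of_le_of_lt ?_ hp.1) hp.2)
    rw [dist_self_add_left, norm_mul, Real.norm_of_nonneg ht.1, Real.dist_eq, Real.norm_eq_abs]
    exact mul_le_of_le_one_left (abs_nonneg _) ht.2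
  calc dslope (fun t ↦ f (t, p.2)) a p.1
    _ = ∫ t in Icc (0 : ℝ) 1, deriv (fun t ↦ f (t, p.2)) (a + t * (p.1 - a)) :=
      dslope_eq_integral_deriv fun t ht ↦
        (hsegment t ht).comp (f := fun x ↦ (x, p.2)) _ (by fun_prop)
    _ = ∫ t in Icc (0 : ℝ) 1, fderiv ℝ f (a + t * (p.1 - a), p.2) (1, 0) :=
      setIntegral_congr_fun measurableSet_Icc fun t ht ↦
        deriv_comp_prodMk_eq_fderiv ((hsegment t ht).differentiableAt one_ne_zero)

theorem contDiffAt_dslope_fst_same [CompleteSpace F] {f : ℝ × E → F} {a : ℝ} {y : E}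
    (hf : ContDiffAt ℝ (n + 1) f (a, y)) :
    ContDiffAt ℝ n (fun p : ℝ × E ↦ dslope (fun t ↦ f (t, p.2)) a p.1) (a, y) := by
  refine ContDiffAt.congr_of_eventuallyEq ?_
    (dslope_fst_eventuallyEq_integral_fderiv (hf.of_le le_add_self))
  refine contDiffAt_setIntegral_of_isCompact isCompact_Icc fun t _ ↦ ?_
  have hfderiv : ContDiffAt ℝ n (fderiv ℝ f) (a + t * (a - a), y) := by
    simpa using hf.fderiv_right le_rfl
  exact (hfderiv.comp (f := fun q : (ℝ × E) × ℝ ↦ (a + q.2 * (q.1.1 - a), q.1.2)) ((a, y), t)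
    (by fun_prop)).clm_apply contDiffAt_const

theorem contDiffAt_dslope_fst_of_ne {n : WithTop ℕ∞} {f : ℝ × E → F} {a : ℝ} {p : ℝ × E}
    (hp : p.1 ≠ a) (hf : ContDiffAt ℝ n f p) (hfa : ContDiffAt ℝ n (fun y ↦ f (a, y)) p.2) :
    ContDiffAt ℝ n (fun q : ℝ × E ↦ dslope (fun t ↦ f (t, q.2)) a q.1) p := by
  have hslope : (fun q : ℝ × E ↦ dslope (fun t ↦ f (t, q.2)) a q.1) =ᶠ[𝓝 p]
      fun q ↦ (q.1 - a)⁻¹ • (f q - f (a, q.2)) := by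
    filter_upwards [continuous_fst.continuousAt.eventually_ne hp] with q hq
    exact dslope_of_ne _ hq
  refine ContDiffAt.congr_of_eventuallyEq ?_ hslope
  exact ((contDiffAt_fst.sub contDiffAt_const).inv (sub_ne_zero.2 hp)).smul
    (hf.sub (hfa.comp p contDiffAt_snd))

theorem stmt_0_general [CompleteSpace F] {W : Set (ℝ × E)} (hW : IsOpen W) {f : ℝ × E → F}
    (hf : ContDiffOn ℝ (n + 1) f W) :
    (∀ y : E, ((0 : ℝ), y) ∈ W → f (0, y) = 0) ↔
      ∃ g : ℝ × E → F, ContDiffOn ℝ n g W ∧ ∀ p ∈ W, f p = p.1 • g p := by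
  refine ⟨fun hzero ↦ ?_, fun ⟨g, _, hfg⟩ y hy ↦ by simp [hfg _ hy]⟩
  -- For `(x, y) ∈ W` with `(0, y) ∉ W` the value `f (0, y)` is arbitrary, so `dslope` of `f` itself
  -- would be wrong there.
  set f₀ : ℝ × E → F := W.indicator f
  have hf₀_zero (y : E) : f₀ (0, y) = 0 := indicator_apply_eq_zero.2 (hzero y)
  have hf₀ (p : ℝ × E) (hp : p ∈ W) : ContDiffAt ℝ (n + 1) f₀ p :=
    (hf.congr fun _ hq ↦ indicator_of_mem hq f).contDiffAt (hW.mem_nhds hp)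
  refine ⟨fun p ↦ dslope (fun t ↦ f₀ (t, p.2)) 0 p.1, fun p hp ↦ ?_, fun p hp ↦ ?_⟩
  · refine ContDiffAt.contDiffWithinAt ?_
    rcases eq_or_ne p.1 0 with hp0 | hp0
    · obtain ⟨x, y⟩ := p
      obtain rfl : x = 0 := hp0
      exact contDiffAt_dslope_fst_same (hf₀ _ hp)
    · refine contDiffAt_dslope_fst_of_ne hp0 ((hf₀ p hp).of_le le_self_add) ?_
      simp only [hf₀_zero, contDiffAt_const]
  · simpa [f₀, hp] using
      (sub_smul_dslope_of_zero (f := fun t ↦ f₀ (t, p.2)) (hf₀_zero p.2) p.1).symm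

end

theorem stmt_0 (d : ℕ) (W : Set (ℝ × (Fin d → ℝ))) (hW : IsOpen W)
    (f : ℝ × (Fin d → ℝ) → ℝ) (hf : ContDiffOn ℝ (⊤ : ℕ∞) f W) :
    (∀ y : Fin d → ℝ, ((0 : ℝ), y) ∈ W → f (0, y) = 0) ↔
      ∃ g : ℝ × (Fin d → ℝ) → ℝ, ContDiffOn ℝ (⊤ : ℕ∞) g W ∧
        ∀ p ∈ W, f p = p.1 * g p :=
  stmt_0_general (n := ⊤) hW hf
end

section
/- Let d be a natural number, let W ⊆ ℝ × ℝ^d be an open set, and let x' : ℝ × ℝ^d → ℝ be C^∞ on W such that: (h1) x'(x, y) ≥ 0 for every (x, y) ∈ W with x ≥ 0; (h2) for every (x, y) ∈ W with x ≥ 0 one has x'(x, y) = 0 if and only if x = 0; (h3) the Fréchet derivative of x' at each point (0, y) ∈ W is nonzero. Then there exists g : ℝ × ℝ^d → ℝ which is C^∞ on W such that x'(x, y) = x · g(x, y) for all (x, y) ∈ W, and g(x, y) > 0 for every (x, y) ∈ W with x ≥ 0. -/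
/-!
The quotient is unproblematic off the hypersurface `{x = 0}`. Near a point of it, the fundamental
theorem of calculus along the segment from `(0, y)` to `(x, y)` gives Hadamard's formula
`f (x, y) = x • ∫ t in 0..1, ∂ₓf (t x, y)`, and the integral depends smoothly on `(x, y)`. On the
hypersurface the quotient is nonnegative by continuity, and it is nonzero because it is the only
coefficient of the differential `g (0, y) dx` of `x g` there.
-/

open Set Filter Topology MeasureTheory

universe u v

section ParametricIntegral

variable {E : Type u} [NormedAddCommGroup E] [NormedSpace ℝ E]
  {F : Type v} [NormedAddCommGroup F] [NormedSpace ℝ F]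

theorem continuousOn_slice_of_forall_continuousAt {X Y Z : Type*} [TopologicalSpace X]
    [TopologicalSpace Y] [TopologicalSpace Z] {f : X × Y → Z} {K : Set Y} {x : X}
    (hf : ∀ y ∈ K, ContinuousAt f (x, y)) : ContinuousOn (fun y => f (x, y)) K :=
  fun y hy => ((hf y hy).comp (f := fun y => (x, y)) (by fun_prop)).continuousWithinAt

theorem exists_eventually_forall_norm_le_of_isCompact {X Y G : Type*} [TopologicalSpace X]
    [TopologicalSpace Y] [SeminormedAddCommGroup G] {f : X × Y → G} {K : Set Y} {x₀ : X}
    (hK : IsCompact K) (hf : ∀ y ∈ K, ContinuousAt f (x₀, y)) :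
    ∃ C, ∀ᶠ x in 𝓝 x₀, ∀ y ∈ K, ‖f (x, y)‖ ≤ C := by
  obtain ⟨C, hC⟩ := hK.exists_bound_of_continuousOn (continuousOn_slice_of_forall_continuousAt hf)
  refine ⟨C + 1, hK.eventually_forall_of_forall_eventually fun y hy => ?_⟩
  exact (hf y hy).norm.eventually_le_const (by linarith [hC y hy])

theorem eventually_forall_contDiffAt_of_isCompact {G : Type*} [NormedAddCommGroup G]
    [NormedSpace ℝ G] {f : E × G → F} {K : Set G} {p₀ : E} {n : WithTop ℕ∞}
    (hK : IsCompact K) (hn : n ≠ (⊤ : ℕ∞)) (hf : ∀ t ∈ K, ContDiffAt ℝ n f (p₀, t)) :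
    ∀ᶠ p in 𝓝 p₀, ∀ t ∈ K, ContDiffAt ℝ n f (p, t) :=
  hK.eventually_forall_of_forall_eventually fun t ht => (hf t ht).eventually hn

theorem continuousAt_parametric_intervalIntegral {X : Type*} [TopologicalSpace X]
    [FirstCountableTopology X] {f : X × ℝ → F} {a b : ℝ} {x₀ : X}
    (hf : ∀ᶠ x in 𝓝 x₀, ∀ t ∈ uIcc a b, ContinuousAt f (x, t)) :
    ContinuousAt (fun x => ∫ t in a..b, f (x, t)) x₀ := by
  obtain ⟨C, hC⟩ := exists_eventually_forall_norm_le_of_isCompact isCompact_uIcc hf.self_of_nhds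
  refine intervalIntegral.continuousAt_of_dominated_interval (bound := fun _ => C) ?_ ?_
    intervalIntegrable_const ?_
  · filter_upwards [hf] with x hx
    have slice_continuousOn := continuousOn_slice_of_forall_continuousAt hx
    exact slice_continuousOn.intervalIntegrable.def'.aestronglyMeasurable
  · filter_upwards [hC] with x hx
    exact .of_forall fun t ht => hx t (uIoc_subset_uIcc ht)
  · exact .of_forall fun t ht =>
      (hf.self_of_nhds t (uIoc_subset_uIcc ht)).comp (f := fun x => (x, t)) (by fun_prop)

theorem hasFDerivAt_parametric_intervalIntegral {f : E × ℝ → F} {a b : ℝ} {p₀ : E}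
    (hf : ∀ t ∈ uIcc a b, ContDiffAt ℝ 1 f (p₀, t)) :
    HasFDerivAt (fun p => ∫ t in a..b, f (p, t))
      (∫ t in a..b, (fderiv ℝ f (p₀, t)).comp (.inl ℝ E ℝ)) p₀ := by
  have partial_continuousAt : ∀ t ∈ uIcc a b,
      ContinuousAt (fun q => (fderiv ℝ f q).comp (.inl ℝ E ℝ)) (p₀, t) := fun t ht =>
    ((hf t ht).fderiv_right (m := 0) (by simp)).continuousAt.clm_comp continuousAt_const
  have slice_integrable {p : E} (hp : ∀ t ∈ uIcc a b, ContDiffAt ℝ 1 f (p, t)) :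
      IntervalIntegrable (fun t => f (p, t)) volume a b :=
    (continuousOn_slice_of_forall_continuousAt fun t ht =>
      (hp t ht).continuousAt).intervalIntegrable
  have hf_near := eventually_forall_contDiffAt_of_isCompact isCompact_uIcc (by simp) hf
  obtain ⟨C, hC⟩ := exists_eventually_forall_norm_le_of_isCompact isCompact_uIcc
    partial_continuousAt
  refine intervalIntegral.hasFDerivAt_integral_of_dominated_of_fderiv_le
    (F' := fun p t => (fderiv ℝ f (p, t)).comp (.inl ℝ E ℝ)) (bound := fun _ => C)
    (hf_near.and hC) ?_ (slice_integrable hf) ?_ ?_ intervalIntegrable_const ?_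
  · exact hf_near.mono fun p hp => (slice_integrable hp).def'.aestronglyMeasurable
  · exact (continuousOn_slice_of_forall_continuousAt
      partial_continuousAt).intervalIntegrable.def'.aestronglyMeasurable
  · exact .of_forall fun t ht p hp => hp.2 t (uIoc_subset_uIcc ht)
  · exact .of_forall fun t ht p hp =>
      ((hp.1 t (uIoc_subset_uIcc ht)).differentiableAt one_ne_zero).hasFDerivAt.comp p
        (hasFDerivAt_prodMk_left p t)

-- The induction replaces `F` by `E →L[ℝ] F`, so the universe of `F` has to absorb that of `E`.
theorem contDiffAt_parametric_intervalIntegral_nat {F : Type (max u v)} [NormedAddCommGroup F]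
    [NormedSpace ℝ F] {f : E × ℝ → F} {a b : ℝ} {p₀ : E} {n : ℕ}
    (hf : ∀ t ∈ uIcc a b, ContDiffAt ℝ n f (p₀, t)) :
    ContDiffAt ℝ n (fun p => ∫ t in a..b, f (p, t)) p₀ := by
  have hf_near := eventually_forall_contDiffAt_of_isCompact isCompact_uIcc (by simp) hf
  induction n generalizing F with
  | zero =>
    refine contDiffAt_zero.2 ⟨_, hf_near.eventually_nhds, fun p hp => ?_⟩
    exact (continuousAt_parametric_intervalIntegral <| hp.mono fun q hq t ht =>
      (hq t ht).continuousAt).continuousWithinAt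
  | succ n ih =>
    have hf_partial : ∀ t ∈ uIcc a b,
        ContDiffAt ℝ n (fun q => (fderiv ℝ f q).comp (.inl ℝ E ℝ)) (p₀, t) := fun t ht =>
      ((hf t ht).fderiv_right (by simp)).clm_comp contDiffAt_const
    refine contDiffAt_succ_iff_hasFDerivAt.2 ⟨_, ⟨_, hf_near, fun p hp => ?_⟩, ih hf_partial <|
      eventually_forall_contDiffAt_of_isCompact isCompact_uIcc (by simp) hf_partial⟩
    exact hasFDerivAt_parametric_intervalIntegral fun t ht => (hp t ht).of_le (by simp)

theorem contDiffAt_parametric_intervalIntegral {f : E × ℝ → F} {a b : ℝ} {p₀ : E} {n : ℕ∞}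
    (hf : ∀ t ∈ uIcc a b, ContDiffAt ℝ n f (p₀, t)) :
    ContDiffAt ℝ n (fun p => ∫ t in a..b, f (p, t)) p₀ := by
  let lift : F ≃L[ℝ] ULift.{u} F := ContinuousLinearEquiv.ulift.symm
  have lift_integral : (lift ∘ fun p => ∫ t in a..b, f (p, t)) =
      fun p => ∫ t in a..b, lift (f (p, t)) := by
    funext p
    simp only [Function.comp_apply, intervalIntegral, lift.integral_comp_comm, map_sub]
  rw [← lift.comp_contDiffAt_iff, lift_integral]
  refine contDiffWithinAt_iff_forall_nat_le.2 fun m hm => ?_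
  exact contDiffAt_parametric_intervalIntegral_nat fun t ht =>
    (lift.comp_contDiffAt_iff.2 (hf t ht)).of_le (mod_cast hm)

end ParametricIntegral

section Division

variable {E : Type*} [NormedAddCommGroup E] [NormedSpace ℝ E]
  {F : Type*} [NormedAddCommGroup F] [NormedSpace ℝ F]

/-- Hadamard's integral formula for the difference quotient `(f (x, y) - f (0, y)) / x`: the mean
of the partial derivative of `f` in the first variable over the segment from `(0, y)` to `(x, y)`.
It is meaningful only when `f` is `C¹` near that segment. -/
noncomputable def hadamardQuotient (f : ℝ × E → F) (p : ℝ × E) : F :=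
  ∫ t in (0 : ℝ)..1, fderiv ℝ f (t * p.1, p.2) (1, 0)

theorem contDiffAt_hadamardQuotient {f : ℝ × E → F} {p : ℝ × E} {n : ℕ∞}
    (hf : ∀ t ∈ uIcc (0 : ℝ) 1, ContDiffAt ℝ (n + 1) f (t * p.1, p.2)) :
    ContDiffAt ℝ n (hadamardQuotient f) p := by
  refine contDiffAt_parametric_intervalIntegral
    (f := fun q : (ℝ × E) × ℝ => fderiv ℝ f (q.2 * q.1.1, q.1.2) (1, 0)) fun t ht => ?_
  have fderiv_contDiffAt : ContDiffAt ℝ n (fderiv ℝ f) (t * p.1, p.2) :=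
    (hf t ht).fderiv_right le_rfl
  exact (fderiv_contDiffAt.comp (p, t)
    (f := fun q : (ℝ × E) × ℝ => (q.2 * q.1.1, q.1.2)) (by fun_prop)).clm_apply contDiffAt_const

theorem fst_smul_hadamardQuotient [CompleteSpace F] {f : ℝ × E → F} {p : ℝ × E}
    (hf : ∀ t ∈ uIcc (0 : ℝ) 1, ContDiffAt ℝ 1 f (t * p.1, p.2)) :
    p.1 • hadamardQuotient f p = f p - f (0, p.2) := by
  have segment_deriv (t : ℝ) :
      HasDerivAt (fun t => (t * p.1, p.2)) (p.1 • ((1 : ℝ), (0 : E))) t := by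
    simpa using ((hasDerivAt_id t).mul_const p.1).prodMk (hasDerivAt_const t p.2)
  have f_segment_deriv : ∀ t ∈ uIcc (0 : ℝ) 1, HasDerivAt (fun t => f (t * p.1, p.2))
      (p.1 • fderiv ℝ f (t * p.1, p.2) (1, 0)) t := fun t ht => by
    simpa only [map_smul, Function.comp_def] using
      ((hf t ht).differentiableAt one_ne_zero).hasFDerivAt.comp_hasDerivAt t (segment_deriv t)
  have deriv_continuousOn :
      ContinuousOn (fun t => p.1 • fderiv ℝ f (t * p.1, p.2) (1, 0)) (uIcc 0 1) := fun t ht =>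
    (((hf t ht).fderiv_right (m := 0) (by simp)).continuousAt.comp
      (f := fun t => (t * p.1, p.2)) (by fun_prop)
      |>.clm_apply continuousAt_const |>.const_smul p.1).continuousWithinAt
  calc p.1 • hadamardQuotient f p
      = ∫ t in (0 : ℝ)..1, p.1 • fderiv ℝ f (t * p.1, p.2) (1, 0) :=
        (intervalIntegral.integral_smul _ _).symm
    _ = f (1 * p.1, p.2) - f (0 * p.1, p.2) :=
        intervalIntegral.integral_eq_sub_of_hasDerivAt f_segment_deriv
          deriv_continuousOn.intervalIntegrable
    _ = f p - f (0, p.2) := by simp only [one_mul, zero_mul]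

theorem eventually_hadamardQuotient_eq_inv_smul [CompleteSpace F] {W : Set (ℝ × E)}
    (hW : IsOpen W) {f : ℝ × E → F} (hf : ContDiffOn ℝ 1 f W)
    (hf₀ : ∀ y, (0, y) ∈ W → f (0, y) = 0) {y : E} (hy : (0, y) ∈ W) :
    ∀ᶠ p in 𝓝 (0, y), p.1 ≠ 0 → hadamardQuotient f p = p.1⁻¹ • f p := by
  have segment_subset : ∀ᶠ p : ℝ × E in 𝓝 (0, y), ∀ t ∈ uIcc (0 : ℝ) 1, (t * p.1, p.2) ∈ W := by
    refine isCompact_uIcc.eventually_forall_of_forall_eventually fun t _ => ?_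
    have : Continuous fun q : (ℝ × E) × ℝ => (q.2 * q.1.1, q.1.2) := by fun_prop
    exact this.continuousAt.eventually_mem (hW.mem_nhds (by simpa using hy))
  filter_upwards [segment_subset] with p hp hp₀
  have hbase : f (0, p.2) = 0 := hf₀ _ (by simpa using hp 0 left_mem_uIcc)
  rw [eq_inv_smul_iff₀ hp₀, fst_smul_hadamardQuotient fun t ht =>
    hf.contDiffAt (hW.mem_nhds (hp t ht)), hbase, sub_zero]

theorem exists_contDiffOn_eq_fst_smul [CompleteSpace F] {W : Set (ℝ × E)} (hW : IsOpen W)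
    {f : ℝ × E → F} {n : ℕ∞} (hf : ContDiffOn ℝ (n + 1) f W)
    (hf₀ : ∀ y, (0, y) ∈ W → f (0, y) = 0) :
    ∃ g : ℝ × E → F, ContDiffOn ℝ n g W ∧ ∀ p ∈ W, f p = p.1 • g p := by
  classical
  let g : ℝ × E → F := fun p => if p.1 = 0 then hadamardQuotient f p else p.1⁻¹ • f p
  refine ⟨g, fun p hp => ContDiffAt.contDiffWithinAt ?_, fun p hp => ?_⟩
  · have hfp : ContDiffAt ℝ (n + 1) f p := hf.contDiffAt (hW.mem_nhds hp)
    rcases eq_or_ne p.1 0 with hp₀ | hp₀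
    · obtain ⟨x, y⟩ := p
      obtain rfl : x = 0 := hp₀
      have g_eq : g =ᶠ[𝓝 (0, y)] hadamardQuotient f := by
        filter_upwards [eventually_hadamardQuotient_eq_inv_smul hW
          (hf.of_le (by simp)) hf₀ hp] with q hq
        by_cases hq₀ : q.1 = 0
        · simp only [g, if_pos hq₀]
        · simp only [g, if_neg hq₀, hq hq₀]
      refine (contDiffAt_hadamardQuotient fun t _ => ?_).congr_of_eventuallyEq g_eq
      simpa only [mul_zero] using hfp
    · have g_eq : g =ᶠ[𝓝 p] fun q => q.1⁻¹ • f q := by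
        filter_upwards [continuousAt_fst.eventually_ne hp₀] with q hq using if_neg hq
      exact ((contDiffAt_fst.inv hp₀).smul (hfp.of_le (by simp))).congr_of_eventuallyEq g_eq
  · by_cases hp₀ : p.1 = 0
    · rw [hp₀, zero_smul, ← hf₀ p.2 (by rwa [← hp₀]), ← hp₀]
    · simp only [g, if_neg hp₀, smul_inv_smul₀ hp₀]

theorem hasFDerivAt_fst_smul_of_fst_eq_zero {g : ℝ × E → F} {y : E}
    (hg : ContinuousAt g (0, y)) :
    HasFDerivAt (fun p => p.1 • g p)
      ((ContinuousLinearMap.fst ℝ ℝ E).smulRight (g (0, y))) (0, y) := by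
  have fst_isBigO : (fun p : ℝ × E => p.1) =O[𝓝 (0, y)] fun p => p - (0, y) :=
    .of_bound' <| .of_forall fun p => by simpa using norm_fst_le (p - ((0 : ℝ), y))
  have g_sub_isLittleO : (fun p => g p - g (0, y)) =o[𝓝 (0, y)] fun _ => (1 : ℝ) :=
    (Asymptotics.isLittleO_one_iff ℝ).2 (tendsto_sub_nhds_zero_iff.2 hg)
  refine .of_isLittleO ?_
  simpa [smul_sub] using fst_isBigO.norm_right.smul_isLittleO g_sub_isLittleO

theorem pos_of_eq_fst_mul_of_fderiv_ne_zero {f g : ℝ × E → ℝ} {y : E}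
    (hg : ContinuousAt g (0, y)) (hfg : ∀ᶠ p in 𝓝 (0, y), f p = p.1 * g p)
    (hf : ∀ᶠ p in 𝓝 (0, y), 0 ≤ p.1 → 0 ≤ f p) (hf' : fderiv ℝ f (0, y) ≠ 0) :
    0 < g (0, y) := by
  have approach : Tendsto (fun t : ℝ => (t, y)) (𝓝[>] 0) (𝓝 (0, y)) :=
    ((Continuous.prodMk_left y).tendsto 0).mono_left nhdsWithin_le_nhds
  have g_nonneg : 0 ≤ g (0, y) := by
    refine ge_of_tendsto (hg.tendsto.comp approach) ?_
    filter_upwards [approach.eventually hfg, approach.eventually hf, self_mem_nhdsWithin]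
      with t hfgt hft (ht : 0 < t)
    exact nonneg_of_mul_nonneg_right (hfgt ▸ hft ht.le) ht
  have g_ne_zero : g (0, y) ≠ 0 := fun hg₀ => hf' <| by
    rw [EventuallyEq.fderiv_eq hfg]
    simpa [hg₀] using (hasFDerivAt_fst_smul_of_fst_eq_zero hg).fderiv
  exact g_nonneg.lt_of_ne' g_ne_zero

end Division

theorem stmt_1_general {E : Type*} [NormedAddCommGroup E] [NormedSpace ℝ E] {n : ℕ∞}
    {W : Set (ℝ × E)} (hW : IsOpen W) {x' : ℝ × E → ℝ} (hx' : ContDiffOn ℝ (n + 1) x' W)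
    (h1 : ∀ p ∈ W, 0 ≤ p.1 → 0 ≤ x' p)
    (h2 : ∀ p ∈ W, 0 ≤ p.1 → (x' p = 0 ↔ p.1 = 0))
    (h3 : ∀ y : E, ((0 : ℝ), y) ∈ W → fderiv ℝ x' ((0 : ℝ), y) ≠ 0) :
    ∃ g : ℝ × E → ℝ, ContDiffOn ℝ n g W ∧
      (∀ p ∈ W, x' p = p.1 * g p) ∧ (∀ p ∈ W, 0 ≤ p.1 → 0 < g p) := by
  obtain ⟨g, hg, hxg⟩ := exists_contDiffOn_eq_fst_smul hW hx' fun y hy => (h2 _ hy le_rfl).2 rfl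
  refine ⟨g, hg, hxg, ?_⟩
  rintro ⟨x, y⟩ hp hx
  rcases hx.eq_or_lt with rfl | hx_pos
  · have W_mem : W ∈ 𝓝 (0, y) := hW.mem_nhds hp
    exact pos_of_eq_fst_mul_of_fderiv_ne_zero (hg.continuousOn.continuousAt W_mem)
      (eventually_of_mem W_mem hxg) (eventually_of_mem W_mem h1) (h3 y hp)
  · have x'_pos : 0 < x' (x, y) :=
      (h1 _ hp hx).lt_of_ne' fun h => hx_pos.ne' ((h2 _ hp hx).1 h)
    rw [hxg _ hp] at x'_pos
    exact pos_of_mul_pos_right x'_pos hx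

theorem stmt_1 (d : ℕ) (W : Set (ℝ × (Fin d → ℝ))) (hW : IsOpen W)
    (x' : ℝ × (Fin d → ℝ) → ℝ) (hx' : ContDiffOn ℝ (⊤ : ℕ∞) x' W)
    (h1 : ∀ p ∈ W, 0 ≤ p.1 → 0 ≤ x' p)
    (h2 : ∀ p ∈ W, 0 ≤ p.1 → (x' p = 0 ↔ p.1 = 0))
    (h3 : ∀ y : Fin d → ℝ, ((0 : ℝ), y) ∈ W → fderiv ℝ x' ((0 : ℝ), y) ≠ 0) :
    ∃ g : ℝ × (Fin d → ℝ) → ℝ, ContDiffOn ℝ (⊤ : ℕ∞) g W ∧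
      (∀ p ∈ W, x' p = p.1 * g p) ∧ (∀ p ∈ W, 0 ≤ p.1 → 0 < g p) :=
  stmt_1_general hW hx' h1 h2 h3
end

section
/- Define the 2×2 real matrices C₁ := (1/2)·[[1,0],[1,0]], D₁ := [[0,0],[0,1]], C₂ := (1/2)·[[0,−1],[0,−1]], D₂ := [[−1,0],[0,0]], N := (1/2)·[[−1,−1],[1,1]]. Define 12×12 real matrices A¹, A², A³, regarded as 6×6 arrays of 2×2 blocks (block (p,q) occupying rows 2p−1, 2p and columns 2q−1, 2q), as follows: for a ∈ {1,2} the only nonzero blocks of A^a are block(1,6) = −D_a, block(2,5) = C_a, block(3,5) = D_a, block(4,6) = −C_a, together with the transposed blocks block(6,1) = −D_aᵀ, block(5,2) = C_aᵀ, block(5,3) = D_aᵀ, block(6,4) = −C_aᵀ; the only nonzero blocks of A³ are block(1,2) = N, block(2,1) = Nᵀ, block(3,4) = −N, block(4,3) = −Nᵀ. Then A¹, A², A³ are symmetric, and for all real x, y, z, writing M := x·A¹ + y·A² + z·A³ and c := √(x² + y² + z²), both c·1 − M and c·1 + M are positive semidefinite. -/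
open scoped Matrix

noncomputable section

def C₁ : Matrix (Fin 2) (Fin 2) ℝ := (1/2 : ℝ) • !![1, 0; 1, 0]
def D₁ : Matrix (Fin 2) (Fin 2) ℝ := !![0, 0; 0, 1]
def C₂ : Matrix (Fin 2) (Fin 2) ℝ := (1/2 : ℝ) • !![0, -1; 0, -1]
def D₂ : Matrix (Fin 2) (Fin 2) ℝ := !![-1, 0; 0, 0]
def N : Matrix (Fin 2) (Fin 2) ℝ := (1/2 : ℝ) • !![-1, -1; 1, 1]

/-- Assemble a 12×12 matrix from a 6×6 array of 2×2 blocks: block `(p, q)` occupies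
rows `2p, 2p+1` and columns `2q, 2q+1` (0-based indexing). -/
def ofBlocks (B : Matrix (Fin 6) (Fin 6) (Matrix (Fin 2) (Fin 2) ℝ)) :
    Matrix (Fin 12) (Fin 12) ℝ :=
  Matrix.of fun i j =>
    B ⟨i.1 / 2, by have := i.isLt; omega⟩ ⟨j.1 / 2, by have := j.isLt; omega⟩
      ⟨i.1 % 2, by omega⟩ ⟨j.1 % 2, by omega⟩

def A₁ : Matrix (Fin 12) (Fin 12) ℝ := ofBlocks
  !![0, 0, 0, 0, 0, -D₁;
     0, 0, 0, 0, C₁, 0;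
     0, 0, 0, 0, D₁, 0;
     0, 0, 0, 0, 0, -C₁;
     0, C₁ᵀ, D₁ᵀ, 0, 0, 0;
     -D₁ᵀ, 0, 0, -C₁ᵀ, 0, 0]

def A₂ : Matrix (Fin 12) (Fin 12) ℝ := ofBlocks
  !![0, 0, 0, 0, 0, -D₂;
     0, 0, 0, 0, C₂, 0;
     0, 0, 0, 0, D₂, 0;
     0, 0, 0, 0, 0, -C₂;
     0, C₂ᵀ, D₂ᵀ, 0, 0, 0;
     -D₂ᵀ, 0, 0, -C₂ᵀ, 0, 0]

def A₃ : Matrix (Fin 12) (Fin 12) ℝ := ofBlocks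
  !![0, N, 0, 0, 0, 0;
     Nᵀ, 0, 0, 0, 0, 0;
     0, 0, 0, -N, 0, 0;
     0, 0, -Nᵀ, 0, 0, 0;
     0, 0, 0, 0, 0, 0;
     0, 0, 0, 0, 0, 0]

/-!
Up to a permutation of the indices the symbol `M` is the block off-diagonal matrix
`fromBlocks 0 K Kᵀ 0`. By a Schur complement, `c • 1 ± M` is positive semidefinite as soon as
`c ^ 2 • 1 - Kᵀ * K` is. For `c ^ 2 = x ^ 2 + y ^ 2 + z ^ 2` the eigenvalues of `Kᵀ * K` are `0`,
`(x ^ 2 + y ^ 2) / 2` and `c ^ 2`, each with multiplicity two, and `c ^ 2 • 1 - Kᵀ * K` is an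
explicit sum of four rank-one squares.
-/

open Matrix

section OffDiagonal

variable {m n 𝕜 : Type*} [Fintype m] [Finite n] [RCLike 𝕜]

open scoped MatrixOrder ComplexOrder in
lemma eq_zero_of_posSemidef_neg_conjTranspose_mul_self {K : Matrix m n 𝕜}
    (hK : (-(Kᴴ * K)).PosSemidef) : K = 0 := by
  rw [← conjTranspose_mul_self_eq_zero]
  exact le_antisymm (neg_nonneg.1 (nonneg_iff_posSemidef.2 hK))
    (nonneg_iff_posSemidef.2 (posSemidef_conjTranspose_mul_self K))

variable [DecidableEq m] [DecidableEq n]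

open scoped ComplexOrder in
-- For `c > 0`, the Schur complement of the upper left block `c • 1` is `c⁻¹ • (c² • 1 - Kᴴ K)`.
lemma posSemidef_smul_one_add_fromBlocks_zero {K : Matrix m n 𝕜} {c : ℝ} (hc : 0 ≤ c)
    (hK : (c ^ 2 • (1 : Matrix n n 𝕜) - Kᴴ * K).PosSemidef) :
    (c • (1 : Matrix (m ⊕ n) (m ⊕ n) 𝕜) + fromBlocks 0 K Kᴴ 0).PosSemidef := by
  have := Fintype.ofFinite n
  rcases hc.eq_or_lt with rfl | hc
  · have hK0 : K = 0 := eq_zero_of_posSemidef_neg_conjTranspose_mul_self (by simpa using hK)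
    simpa [hK0] using PosSemidef.zero
  · have hcone : (c • (1 : Matrix m m 𝕜)).PosDef := PosDef.one.smul hc
    have hinv : (c • (1 : Matrix m m 𝕜))⁻¹ = c⁻¹ • 1 :=
      inv_eq_left_inv (by simp [smul_smul, hc.ne'])
    have hschur : c • 1 - Kᴴ * (c • 1 : Matrix m m 𝕜)⁻¹ * K = c⁻¹ • (c ^ 2 • 1 - Kᴴ * K) := by
      simp [hinv, smul_sub, smul_smul, sq, hc.ne']
    let _ := hcone.isUnit.invertible
    rw [← fromBlocks_one, fromBlocks_smul, fromBlocks_add]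
    simp only [smul_zero, zero_add, add_zero]
    rw [hcone.fromBlocks₁₁, hschur]
    exact hK.smul (inv_nonneg.2 hc.le)

open scoped ComplexOrder in
lemma posSemidef_smul_one_sub_fromBlocks_zero {K : Matrix m n 𝕜} {c : ℝ} (hc : 0 ≤ c)
    (hK : (c ^ 2 • (1 : Matrix n n 𝕜) - Kᴴ * K).PosSemidef) :
    (c • (1 : Matrix (m ⊕ n) (m ⊕ n) 𝕜) - fromBlocks 0 K Kᴴ 0).PosSemidef := by
  have hneg := posSemidef_smul_one_add_fromBlocks_zero (K := -K) hc (by simpa using hK)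
  simpa [sub_eq_add_neg, fromBlocks_neg] using hneg

end OffDiagonal

section Splitting

/-- The map induced on the twelve indices by a distribution `τ` of the six block indices over the
two sides of a block off-diagonal matrix; a scalar index is a block index with a position `Fin 2`
inside the block. -/
def splitIndex {α β : Type*} (τ : Fin 6 → α ⊕ β) : Fin 12 → α × Fin 2 ⊕ β × Fin 2 :=
  Equiv.sumProdDistrib α β (Fin 2) ∘ Prod.map τ id ∘ (finProdFinEquiv (m := 6) (n := 2)).symm

lemma splitIndex_injective {α β : Type*} {τ : Fin 6 → α ⊕ β} (hτ : Function.Injective τ) :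
    Function.Injective (splitIndex τ) :=
  (Equiv.injective _).comp ((hτ.prodMap Function.injective_id).comp (Equiv.injective _))

lemma ofBlocks_eq_reindex (B : Matrix (Fin 6) (Fin 6) (Matrix (Fin 2) (Fin 2) ℝ)) :
    ofBlocks B = reindex finProdFinEquiv finProdFinEquiv (comp _ _ _ _ _ B) := rfl

lemma ofBlocks_add (B B' : Matrix (Fin 6) (Fin 6) (Matrix (Fin 2) (Fin 2) ℝ)) :
    ofBlocks (B + B') = ofBlocks B + ofBlocks B' := rfl

lemma ofBlocks_smul (c : ℝ) (B : Matrix (Fin 6) (Fin 6) (Matrix (Fin 2) (Fin 2) ℝ)) :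
    ofBlocks (c • B) = c • ofBlocks B := rfl

lemma ofBlocks_submatrix_fromBlocks_zero {α β : Type*} (τ : Fin 6 → α ⊕ β)
    (B : Matrix α β (Matrix (Fin 2) (Fin 2) ℝ)) :
    ofBlocks ((fromBlocks 0 B (Bᵀ.map transpose) 0).submatrix τ τ) =
      (fromBlocks 0 (comp _ _ _ _ _ B) (comp _ _ _ _ _ B)ᵀ 0).submatrix
        (splitIndex τ) (splitIndex τ) := by
  ext i j
  simp only [ofBlocks_eq_reindex, reindex_apply, submatrix_apply, comp_apply, splitIndex,
    Function.comp_apply]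
  generalize (finProdFinEquiv (m := 6) (n := 2)).symm i = k,
    (finProdFinEquiv (m := 6) (n := 2)).symm j = l
  obtain ⟨p, r⟩ := k
  obtain ⟨q, s⟩ := l
  simp only [Prod.map_apply, id]
  cases τ p <;> cases τ q <;> rfl

end Splitting

/-- The nonzero blocks of the symbol `x A₁ + y A₂ + z A₃` lie in the block rows `0, 3, 4` and block
columns `2, 1, 5` (0-based), or the other way round; this is the array of the former, with its rows
and columns listed in these orders. -/
def couplingBlocks (x y z : ℝ) : Matrix (Fin 3) (Fin 3) (Matrix (Fin 2) (Fin 2) ℝ) :=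
  !![0, z • N, -(x • D₁ + y • D₂);
     -(z • N)ᵀ, 0, -(x • C₁ + y • C₂);
     (x • D₁ + y • D₂)ᵀ, (x • C₁ + y • C₂)ᵀ, 0]

/-- The scalar matrix whose `2 × 2` blocks form the array `couplingBlocks x y z`. -/
def coupling (x y z : ℝ) : Matrix (Fin 6) (Fin 6) ℝ :=
  !![0, 0, -z / 2, -z / 2, y, 0;
     0, 0, z / 2, z / 2, 0, -x;
     z / 2, -z / 2, 0, 0, -x / 2, y / 2;
     z / 2, -z / 2, 0, 0, -x / 2, y / 2;
     -y, 0, x / 2, x / 2, 0, 0;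
     0, x, -y / 2, -y / 2, 0, 0]

/-- The distribution of the six block indices under which the symbol becomes block off-diagonal. -/
def couplingSplit : Fin 6 → Fin 3 ⊕ Fin 3 :=
  ![.inl 0, .inr 1, .inr 0, .inl 1, .inl 2, .inr 2]

lemma symbol_eq_submatrix (x y z : ℝ) :
    x • A₁ + y • A₂ + z • A₃ =
      (fromBlocks 0 (comp _ _ _ _ _ (couplingBlocks x y z))
        (comp _ _ _ _ _ (couplingBlocks x y z))ᵀ 0).submatrix
        (splitIndex couplingSplit) (splitIndex couplingSplit) := by
  rw [← ofBlocks_submatrix_fromBlocks_zero, A₁, A₂, A₃]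
  simp only [← ofBlocks_smul, ← ofBlocks_add]
  congr 1
  ext1 p q
  simp only [Matrix.add_apply, Matrix.smul_apply, submatrix_apply, couplingSplit]
  fin_cases p <;> fin_cases q <;> simp [couplingBlocks, neg_add, -neg_add_rev]

lemma symbol_isSymm (x y z : ℝ) : (x • A₁ + y • A₂ + z • A₃).IsSymm := by
  rw [symbol_eq_submatrix]
  exact (IsSymm.fromBlocks isSymm_zero rfl isSymm_zero).submatrix _

lemma couplingBlocks_eq (x y z : ℝ) :
    couplingBlocks x y z =
      !![0, !![-z / 2, -z / 2; z / 2, z / 2], !![y, 0; 0, -x];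
         !![z / 2, -z / 2; z / 2, -z / 2], 0, !![-x / 2, y / 2; -x / 2, y / 2];
         !![-y, 0; 0, x], !![x / 2, x / 2; -y / 2, -y / 2], 0] := by
  have hN : z • N = !![-z / 2, -z / 2; z / 2, z / 2] := by
    simp [N, div_eq_mul_inv]
  have hC : x • C₁ + y • C₂ = !![x / 2, -y / 2; x / 2, -y / 2] := by
    simp [C₁, C₂, div_eq_mul_inv]
  have hD : x • D₁ + y • D₂ = !![-y, 0; 0, x] := by
    simp [D₁, D₂]
  have htranspose (a b c d : ℝ) : !![a, b; c, d]ᵀ = !![a, c; b, d] := by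
    ext i j
    fin_cases i <;> fin_cases j <;> rfl
  simp only [couplingBlocks, hN, hC, hD, htranspose]
  simp [neg_div]

lemma comp_couplingBlocks (x y z : ℝ) :
    comp _ _ _ _ _ (couplingBlocks x y z) =
      (coupling x y z).submatrix finProdFinEquiv finProdFinEquiv := by
  rw [couplingBlocks_eq]
  ext ⟨p, r⟩ ⟨q, s⟩
  fin_cases p <;> fin_cases q <;> fin_cases r <;> fin_cases s <;> rfl

lemma smul_one_sub_coupling_gram_eq (x y z : ℝ) :
    (x ^ 2 + y ^ 2 + z ^ 2) • 1 - (coupling x y z)ᵀ * coupling x y z =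
      vecMulVec ![x, 0, y / 2, y / 2, z, 0] ![x, 0, y / 2, y / 2, z, 0] +
      vecMulVec ![0, y, x / 2, x / 2, 0, z] ![0, y, x / 2, x / 2, 0, z] +
      (1 / 2 : ℝ) • vecMulVec ![-z, -z, 0, 0, x, y] ![-z, -z, 0, 0, x, y] +
      ((x ^ 2 + y ^ 2 + z ^ 2) / 2) • vecMulVec ![0, 0, 1, -1, 0, 0] ![0, 0, 1, -1, 0, 0] := by
  ext i j
  fin_cases i <;> fin_cases j <;> simp [coupling, mul_apply, Fin.sum_univ_six] <;> ring

lemma posSemidef_smul_one_sub_coupling_gram (x y z : ℝ) :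
    ((x ^ 2 + y ^ 2 + z ^ 2) • 1 - (coupling x y z)ᵀ * coupling x y z).PosSemidef := by
  rw [smul_one_sub_coupling_gram_eq]
  have hsq (a : Fin 6 → ℝ) : (vecMulVec a a).PosSemidef := posSemidef_vecMulVec_self_star a
  exact (((hsq _).add (hsq _)).add ((hsq _).smul (by norm_num))).add ((hsq _).smul (by positivity))

lemma posSemidef_smul_one_sub_comp_couplingBlocks_gram (x y z : ℝ) :
    ((x ^ 2 + y ^ 2 + z ^ 2) • 1 - (comp _ _ _ _ _ (couplingBlocks x y z))ᵀ *
      comp _ _ _ _ _ (couplingBlocks x y z)).PosSemidef := by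
  rw [comp_couplingBlocks, transpose_submatrix, submatrix_mul_equiv,
    ← submatrix_one_equiv (finProdFinEquiv (m := 3) (n := 2))]
  exact (posSemidef_smul_one_sub_coupling_gram x y z).submatrix _

theorem stmt_6 :
    A₁.IsSymm ∧ A₂.IsSymm ∧ A₃.IsSymm ∧
    ∀ x y z : ℝ,
      (Real.sqrt (x^2 + y^2 + z^2) • (1 : Matrix (Fin 12) (Fin 12) ℝ)
          - (x • A₁ + y • A₂ + z • A₃)).PosSemidef ∧
      (Real.sqrt (x^2 + y^2 + z^2) • (1 : Matrix (Fin 12) (Fin 12) ℝ)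
          + (x • A₁ + y • A₂ + z • A₃)).PosSemidef := by
  refine ⟨by simpa using symbol_isSymm 1 0 0, by simpa using symbol_isSymm 0 1 0,
    by simpa using symbol_isSymm 0 0 1, fun x y z => ?_⟩
  set c := Real.sqrt (x ^ 2 + y ^ 2 + z ^ 2)
  have hc : 0 ≤ c := Real.sqrt_nonneg _
  have hgram := posSemidef_smul_one_sub_comp_couplingBlocks_gram x y z
  rw [← Real.sq_sqrt (show 0 ≤ x ^ 2 + y ^ 2 + z ^ 2 by positivity)] at hgram
  have hinj : Function.Injective (splitIndex couplingSplit) := splitIndex_injective (by decide)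
  rw [symbol_eq_submatrix, ← submatrix_one _ hinj]
  exact ⟨(posSemidef_smul_one_sub_fromBlocks_zero hc hgram).submatrix _,
    (posSemidef_smul_one_add_fromBlocks_zero hc hgram).submatrix _⟩
end
end

section
/- Let e and h be trace-free symmetric real 2×2 matrices, let J be the 2×2 real matrix with rows (0, −1), (1, 0), let ρ ∈ [0, 1] and χ ∈ ℝ. If (h − J·e) + ρ·(cos χ · (h + J·e) + sin χ · J·(h + J·e)) = 0, then ⟨e, J·h⟩ = −((1 − ρ²)/(2(1 + ρ²))) · (‖e‖² + ‖h‖²), where ⟨·,·⟩ and ‖·‖ are the Frobenius inner product and norm. -/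
open scoped Matrix

noncomputable section

def J : Matrix (Fin 2) (Fin 2) ℝ := !![0, -1; 1, 0]

/-!
The Hodge dual `K` is skew-adjoint with square `-1`, hence an isometry with `K x` orthogonal to `x`.
The rotation `c + s K` therefore preserves the quadratic form, and the boundary condition
`F = -ρ (c + s K) G` yields `‖F‖² = ρ² ‖G‖²`. Since `‖h ∓ K e‖² = ‖e‖² + ‖h‖² ± 2 ⟨e, K h⟩`, this is
a linear equation for the flux `⟨e, K h⟩`.
-/

section SkewAdjoint

variable {R V : Type*} [CommRing R] [AddCommGroup V] [Module R V]
  {B : LinearMap.BilinForm R V} {K : V → V}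

lemma form_map_map (hK : B.IsSkewAdjoint K) (hKK : ∀ x, K (K x) = -x) (x y : V) :
    B (K x) (K y) = B x y := by
  rw [hK, Pi.neg_apply, hKK, neg_neg]

lemma form_map_right_eq_neg (hB : B.IsSymm) (hK : B.IsSkewAdjoint K) (x y : V) :
    B x (K y) = -B y (K x) := by
  rw [hB.eq, hK, Pi.neg_apply, map_neg]

lemma form_rotate_self (hK : B.IsSkewAdjoint K) (hKK : ∀ x, K (K x) = -x)
    {c s : R} (hcs : c ^ 2 + s ^ 2 = 1) (x : V) :
    B (c • x + s • K x) (c • x + s • K x) = B x x := by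
  have expand : B (c • x + s • K x) (c • x + s • K x) =
      c ^ 2 * B x x + c * s * (B x (K x) + B (K x) x) + s ^ 2 * B (K x) (K x) := by
    simp only [map_add, map_smul, LinearMap.add_apply, LinearMap.smul_apply, smul_eq_mul]
    ring
  have cross : B x (K x) + B (K x) x = 0 := by
    rw [hK, Pi.neg_apply, map_neg, add_neg_cancel]
  rw [expand, cross, form_map_map hK hKK]
  linear_combination B x x * hcs

lemma form_self_eq_of_add_smul_rotate_eq_zero (hK : B.IsSkewAdjoint K)
    (hKK : ∀ x, K (K x) = -x) {ρ c s : R} (hcs : c ^ 2 + s ^ 2 = 1) {F G : V}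
    (hFG : F + ρ • (c • G + s • K G) = 0) :
    B F F = ρ ^ 2 * B G G := by
  rw [eq_neg_of_add_eq_zero_left hFG, ← form_rotate_self hK hKK hcs G]
  simp only [map_neg, map_smul, LinearMap.neg_apply, LinearMap.smul_apply, smul_eq_mul]
  ring

lemma form_add_map_self (hB : B.IsSymm) (hK : B.IsSkewAdjoint K) (hKK : ∀ x, K (K x) = -x)
    (e h : V) :
    B (h + K e) (h + K e) = B e e + B h h - 2 * B e (K h) := by
  simp only [map_add, LinearMap.add_apply, form_map_map hK hKK, hB.eq (K e) h,
    form_map_right_eq_neg hB hK h e]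
  ring

lemma form_sub_map_self (hB : B.IsSymm) (hK : B.IsSkewAdjoint K) (hKK : ∀ x, K (K x) = -x)
    (e h : V) :
    B (h - K e) (h - K e) = B e e + B h h + 2 * B e (K h) := by
  simp only [map_sub, LinearMap.sub_apply, form_map_map hK hKK, hB.eq (K e) h,
    form_map_right_eq_neg hB hK h e]
  ring

end SkewAdjoint

theorem stmt_7_general {k V : Type*} [Field k] [AddCommGroup V] [Module k V]
    {B : LinearMap.BilinForm k V} {K : V → V} (hB : B.IsSymm) (hK : B.IsSkewAdjoint K)
    (hKK : ∀ x, K (K x) = -x) {ρ c s : k} (hρ : 2 * (1 + ρ ^ 2) ≠ 0) (hcs : c ^ 2 + s ^ 2 = 1)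
    {e h : V} (hbc : (h - K e) + ρ • (c • (h + K e) + s • K (h + K e)) = 0) :
    B e (K h) = -((1 - ρ ^ 2) / (2 * (1 + ρ ^ 2))) * (B e e + B h h) := by
  have norm_eq := form_self_eq_of_add_smul_rotate_eq_zero hK hKK hcs hbc
  rw [form_sub_map_self hB hK hKK, form_add_map_self hB hK hKK] at norm_eq
  rw [← neg_div, div_mul_eq_mul_div, eq_div_iff hρ]
  linear_combination norm_eq

section Frobenius

variable {m n R : Type*} [Fintype m] [Fintype n] [CommRing R]

/-- The Frobenius bilinear form `⟨X, Y⟩ = tr (Xᵀ Y)` on rectangular matrices. It is bundled as a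
bilinear form so that the statements about skew-adjoint maps apply to it. -/
def frobeniusForm : LinearMap.BilinForm R (Matrix m n R) :=
  LinearMap.mk₂ R (fun X Y => (Xᵀ * Y).trace)
    (by simp [Matrix.add_mul]) (by simp) (by simp [Matrix.mul_add]) (by simp)

lemma frobeniusForm_apply (X Y : Matrix m n R) : frobeniusForm X Y = (Xᵀ * Y).trace := rfl

lemma frobeniusForm_isSymm : (frobeniusForm (m := m) (n := n) (R := R)).IsSymm where
  eq X Y := by
    rw [frobeniusForm_apply, frobeniusForm_apply, ← Matrix.trace_transpose (Xᵀ * Y),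
      Matrix.transpose_mul, Matrix.transpose_transpose]

lemma frobeniusForm_isSkewAdjoint_mul_left {A : Matrix m m R} (hA : Aᵀ = -A) :
    frobeniusForm.IsSkewAdjoint (fun X : Matrix m n R => A * X) := fun X Y => by
  simp only [frobeniusForm_apply, Pi.neg_apply, Matrix.transpose_mul, hA, Matrix.mul_neg,
    Matrix.neg_mul, Matrix.mul_assoc]

end Frobenius

lemma J_transpose : Jᵀ = -J := by
  ext i j
  fin_cases i <;> fin_cases j <;> simp [J]

lemma J_mul_J : J * J = -1 := by
  ext i j
  fin_cases i <;> fin_cases j <;> simp [J]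

theorem stmt_7 (e h : Matrix (Fin 2) (Fin 2) ℝ)
    (he : e.IsSymm) (he0 : e.trace = 0) (hh : h.IsSymm) (hh0 : h.trace = 0)
    (ρ χ : ℝ) (hρ0 : 0 ≤ ρ) (hρ1 : ρ ≤ 1)
    (hbc : (h - J * e) +
        ρ • (Real.cos χ • (h + J * e) + Real.sin χ • (J * (h + J * e))) = 0) :
    (eᵀ * (J * h)).trace =
      -((1 - ρ^2) / (2 * (1 + ρ^2))) * ((eᵀ * e).trace + (hᵀ * h).trace) :=
  stmt_7_general frobeniusForm_isSymm (frobeniusForm_isSkewAdjoint_mul_left J_transpose)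
    (fun X => by rw [← mul_assoc, J_mul_J, neg_one_mul]) (by positivity)
    (Real.cos_sq_add_sin_sq χ) hbc
end
end

section
/- Let u⋆, v⋆, w⋆, τ⋆ be real numbers and define P(τ) := 1 + v⋆·(τ − τ⋆) + (u⋆·w⋆/2)·(τ − τ⋆)², u(τ) := u⋆ / P(τ)², v(τ) := (v⋆ + u⋆·w⋆·(τ − τ⋆)) / P(τ), w(τ) := w⋆ · P(τ). Then u(τ⋆) = u⋆, v(τ⋆) = v⋆, w(τ⋆) = w⋆, and at every τ ∈ ℝ with P(τ) ≠ 0 the functions u, v, w are differentiable and satisfy u'(τ) = −2·v(τ)·u(τ), v'(τ) = −v(τ)² + u(τ)·w(τ), and w'(τ) = v(τ)·w(τ). -/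
/-!
The quadratic `P` has `P'' = u₀ * w₀`, and `v = P' / P` is its logarithmic derivative, while
`u = u₀ * P ^ (-2)` and `w = w₀ * P`. A constant multiple of `P ^ m` has logarithmic derivative
`m * v`, which gives the equations for `u` and `w`. The Riccati identity
`(P' / P)' = -(P' / P) ^ 2 + P'' / P` gives the equation for `v`, since
`u * w = u₀ * w₀ / P = P'' / P`.
-/

section

variable {𝕜 : Type*} [NontriviallyNormedField 𝕜]

theorem hasDerivAt_affine (a b x₀ x : 𝕜) :
    HasDerivAt (fun t ↦ a + b * (t - x₀)) b x := by
  simpa only [mul_one] using (((hasDerivAt_id' x).sub_const x₀).const_mul b).const_add a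

theorem hasDerivAt_quadratic (a b c x₀ x : 𝕜) :
    HasDerivAt (fun t ↦ a + b * (t - x₀) + c * (t - x₀) ^ 2) (b + 2 * c * (x - x₀)) x := by
  have hsq : HasDerivAt (fun t ↦ (t - x₀) ^ 2) (2 * (x - x₀)) x := by
    simpa using ((hasDerivAt_id' x).sub_const x₀).fun_pow 2
  exact ((hasDerivAt_affine a b x₀ x).fun_add (hsq.const_mul c)).congr_deriv (by ring)

variable {p q : 𝕜 → 𝕜} {p' p'' x : 𝕜}

theorem hasDerivAt_const_mul_zpow (c : 𝕜) (m : ℤ) (hp : HasDerivAt p p' x) (hx : p x ≠ 0) :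
    HasDerivAt (fun t ↦ c * p t ^ m) (m * (p' / p x) * (c * p x ^ m)) x := by
  have hpow : HasDerivAt (fun t ↦ p t ^ m) (m * p x ^ (m - 1) * p') x :=
    (hasDerivAt_zpow m (p x) (.inl hx)).comp x hp
  refine (hpow.const_mul c).congr_deriv ?_
  rw [zpow_sub_one₀ hx]
  ring

theorem hasDerivAt_deriv_div_self (hp : HasDerivAt p (q x) x) (hq : HasDerivAt q p'' x)
    (hx : p x ≠ 0) :
    HasDerivAt (fun t ↦ q t / p t) (-(q x / p x) ^ 2 + p'' / p x) x := by
  refine (hq.fun_div hp hx).congr_deriv ?_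
  field_simp
  ring

theorem stmt_9_general [NeZero (2 : 𝕜)] (u₀ v₀ w₀ τ₀ : 𝕜) (P u v w : 𝕜 → 𝕜)
    (hP : ∀ τ, P τ = 1 + v₀ * (τ - τ₀) + (u₀ * w₀ / 2) * (τ - τ₀) ^ 2)
    (hu : ∀ τ, u τ = u₀ / (P τ) ^ 2)
    (hv : ∀ τ, v τ = (v₀ + u₀ * w₀ * (τ - τ₀)) / P τ)
    (hw : ∀ τ, w τ = w₀ * P τ) :
    u τ₀ = u₀ ∧ v τ₀ = v₀ ∧ w τ₀ = w₀ ∧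
    ∀ τ, P τ ≠ 0 →
      HasDerivAt u (-2 * v τ * u τ) τ ∧
      HasDerivAt v (-(v τ) ^ 2 + u τ * w τ) τ ∧
      HasDerivAt w (v τ * w τ) τ := by
  have hP₀ : P τ₀ = 1 := by simp [hP]
  refine ⟨by simp [hu, hP₀], by simp [hv, hP₀], by simp [hw, hP₀], fun τ hτ ↦ ?_⟩
  have hP' : HasDerivAt P (v₀ + u₀ * w₀ * (τ - τ₀)) τ := by
    simpa only [← hP, mul_div_cancel₀ _ (two_ne_zero (α := 𝕜))] using
      hasDerivAt_quadratic 1 v₀ (u₀ * w₀ / 2) τ₀ τ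
  have huw : u τ * w τ = u₀ * w₀ / P τ := by
    rw [hu, hw]
    field_simp
  refine ⟨?_, ?_, ?_⟩
  · have hu_zpow (t : 𝕜) : u t = u₀ * P t ^ (-2 : ℤ) := by
      rw [hu, zpow_neg, div_eq_mul_inv, zpow_ofNat]
    simpa only [← hu_zpow, ← hv, Int.cast_neg, Int.cast_ofNat] using
      hasDerivAt_const_mul_zpow u₀ (-2) hP' hτ
  · rw [huw, hv, funext hv]
    exact hasDerivAt_deriv_div_self hP' (hasDerivAt_affine v₀ (u₀ * w₀) τ₀ τ) hτ
  · simpa [← hw, ← hv] using hasDerivAt_const_mul_zpow w₀ 1 hP' hτ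

end

theorem stmt_9 (u₀ v₀ w₀ τ₀ : ℝ) (P u v w : ℝ → ℝ)
    (hP : ∀ τ : ℝ, P τ = 1 + v₀ * (τ - τ₀) + (u₀ * w₀ / 2) * (τ - τ₀)^2)
    (hu : ∀ τ : ℝ, u τ = u₀ / (P τ)^2)
    (hv : ∀ τ : ℝ, v τ = (v₀ + u₀ * w₀ * (τ - τ₀)) / P τ)
    (hw : ∀ τ : ℝ, w τ = w₀ * P τ) :
    u τ₀ = u₀ ∧ v τ₀ = v₀ ∧ w τ₀ = w₀ ∧
    ∀ τ : ℝ, P τ ≠ 0 →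
      HasDerivAt u (-2 * v τ * u τ) τ ∧
      HasDerivAt v (-(v τ)^2 + u τ * w τ) τ ∧
      HasDerivAt w (v τ * w τ) τ :=
  stmt_9_general u₀ v₀ w₀ τ₀ P u v w hP hu hv hw
end

section
/- Let v and w be real numbers and define g(τ) := 2(v + τ) / (w + (v + τ)²). Then at every τ ∈ ℝ with w + (v + τ)² ≠ 0, the function g is twice differentiable and satisfies g''(τ) + 3·g(τ)·g'(τ) + g(τ)³ = 0. -/
/-!
The equation `g'' + 3 g g' + g³ = 0` is the second-order Riccati equation, which the substitution
`g = u' / u` linearizes: differentiating twice gives `g'' + 3 g g' + g³ = u''' / u`. The family in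
question is the logarithmic derivative of the quadratic `u τ = w + (v + τ)²`, for which `u''' = 0`.
-/

open Filter Topology

section LogDeriv

variable {𝕜 : Type*} [NontriviallyNormedField 𝕜] {u : 𝕜 → 𝕜} {x : 𝕜}

theorem hasDerivAt_logDeriv (hu : DifferentiableAt 𝕜 u x) (hu' : DifferentiableAt 𝕜 (deriv u) x)
    (hx : u x ≠ 0) :
    HasDerivAt (logDeriv u) (deriv (deriv u) x / u x - logDeriv u x ^ 2) x := by
  refine (hu'.hasDerivAt.div hu.hasDerivAt hx).congr_deriv ?_
  rw [logDeriv_apply]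
  field_simp

theorem hasDerivAt_deriv_logDeriv (hu : ∀ᶠ y in 𝓝 x, DifferentiableAt 𝕜 u y)
    (hu' : ∀ᶠ y in 𝓝 x, DifferentiableAt 𝕜 (deriv u) y)
    (hu'' : DifferentiableAt 𝕜 (deriv (deriv u)) x) (hx : u x ≠ 0) :
    HasDerivAt (deriv (logDeriv u))
      (deriv (deriv (deriv u)) x / u x - 3 * logDeriv u x * deriv (logDeriv u) x
        - logDeriv u x ^ 3) x := by
  have hux := hu.self_of_nhds
  have hlog := hasDerivAt_logDeriv hux hu'.self_of_nhds hx
  have deriv_logDeriv_eq :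
      deriv (logDeriv u) =ᶠ[𝓝 x] fun y ↦ deriv (deriv u) y / u y - logDeriv u y ^ 2 := by
    filter_upwards [hu, hu', hux.continuousAt.eventually_ne hx] with y huy huy' hy
    exact (hasDerivAt_logDeriv huy huy' hy).deriv
  refine (((hu''.hasDerivAt.fun_div hux.hasDerivAt hx).fun_sub
    (hlog.fun_pow 2)).congr_of_eventuallyEq deriv_logDeriv_eq).congr_deriv ?_
  rw [hlog.deriv, logDeriv_apply]
  simp only [Nat.cast_ofNat, Nat.add_one_sub_one, pow_one]
  field_simp
  ring

end LogDeriv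

section Quadratic

variable {𝕜 : Type*} [NontriviallyNormedField 𝕜] (v w : 𝕜)

theorem deriv_const_add_sq_const_add :
    deriv (fun t : 𝕜 ↦ w + (v + t) ^ 2) = fun t ↦ 2 * (v + t) := by
  ext t
  simpa using ((((hasDerivAt_id t).const_add v).fun_pow 2).const_add w).deriv

theorem logDeriv_const_add_sq_const_add :
    logDeriv (fun t : 𝕜 ↦ w + (v + t) ^ 2) = fun t ↦ 2 * (v + t) / (w + (v + t) ^ 2) := by
  ext t
  rw [logDeriv_apply, deriv_const_add_sq_const_add]

end Quadratic

theorem stmt_10_general {𝕜 : Type*} [NontriviallyNormedField 𝕜] (v w : 𝕜) (g : 𝕜 → 𝕜)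
    (hg : ∀ τ : 𝕜, g τ = 2 * (v + τ) / (w + (v + τ) ^ 2)) (τ : 𝕜) (hτ : w + (v + τ) ^ 2 ≠ 0) :
    DifferentiableAt 𝕜 g τ ∧ DifferentiableAt 𝕜 (deriv g) τ ∧
      deriv (deriv g) τ + 3 * g τ * deriv g τ + g τ ^ 3 = 0 := by
  set u : 𝕜 → 𝕜 := fun t ↦ w + (v + t) ^ 2
  obtain rfl : g = logDeriv u := (funext hg).trans (logDeriv_const_add_sq_const_add v w).symm
  have hu' : deriv u = fun t ↦ 2 * (v + t) := deriv_const_add_sq_const_add v w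
  have hu'' : deriv (deriv u) = fun _ ↦ 2 := by ext t; simp [hu']
  have hu''' : deriv (deriv (deriv u)) τ = 0 := by rw [hu'', deriv_const]
  have diff_u : Differentiable 𝕜 u := by fun_prop
  have diff_u' : Differentiable 𝕜 (deriv u) := by rw [hu']; fun_prop
  have diff_u'' : Differentiable 𝕜 (deriv (deriv u)) := by rw [hu'']; fun_prop
  have hg'' := hasDerivAt_deriv_logDeriv (.of_forall diff_u) (.of_forall diff_u') (diff_u'' τ) hτ
  refine ⟨(hasDerivAt_logDeriv (diff_u τ) (diff_u' τ) hτ).differentiableAt,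
    hg''.differentiableAt, ?_⟩
  rw [hg''.deriv, hu''']
  ring

theorem stmt_10 (v w : ℝ) (g : ℝ → ℝ)
    (hg : ∀ τ : ℝ, g τ = 2 * (v + τ) / (w + (v + τ)^2)) :
    ∀ τ : ℝ, w + (v + τ)^2 ≠ 0 →
      DifferentiableAt ℝ g τ ∧ DifferentiableAt ℝ (deriv g) τ ∧
      deriv (deriv g) τ + 3 * g τ * deriv g τ + (g τ)^3 = 0 :=
  stmt_10_general v w g hg
end

section
/- Let n ≥ 3 be an integer and m > 0 a real number. Define f(s) := 1 + s² and f_m(s) := 1 + s² − 2m/s^(n−2) for s > 0, and let r⋆ be the unique positive real with r⋆^n + r⋆^(n−2) = 2m. Then for every r > r⋆ the function s ↦ f_m(s)^(−1/2) is integrable on the interval (r⋆, r], and, defining x(r) := exp(−∫₀^r f(s)^(−1/2) ds) and x_m(r) := exp(−∫_{r⋆}^r f_m(s)^(−1/2) ds) for r > r⋆, there exists a real number L > 0 such that x_m(r)/x(r) tends to L as r → ∞. -/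
open Filter MeasureTheory

/-!
Near the horizon `r₀` one has `f_m(s) ≥ s² - r₀² ≥ r₀ (s - r₀)`, so `f_m ^ (-1/2)` has at worst an
inverse square root singularity there. At infinity `f` and `f_m` both grow like `s²` while `f - f_m`
stays bounded, so by the mean value inequality `f_m ^ (-1/2) - f ^ (-1/2) = O(s⁻³)`. Hence this
difference is integrable on `(r₀, ∞)`, and `log (x_m / x)` is, up to the constant
`∫₀^{r₀} f ^ (-1/2)`, minus its integral over `(r₀, r)`.
-/

theorem abs_rpow_neg_sub_rpow_neg_le {q δ u v : ℝ} (hq : 0 ≤ q) (hδ : 0 < δ)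
    (hu : δ ≤ u) (hv : δ ≤ v) :
    |u ^ (-q) - v ^ (-q)| ≤ q * δ ^ (-q - 1) * |u - v| := by
  refine (convex_Ici δ).norm_image_sub_le_of_norm_hasDerivWithin_le
    (fun t ht => (Real.hasDerivAt_rpow_const (.inl (hδ.trans_le ht).ne')).hasDerivWithinAt)
    (fun t ht => ?_) hv hu
  have ht₀ : 0 < t := hδ.trans_le ht
  rw [norm_mul, norm_neg, Real.norm_of_nonneg hq,
    Real.norm_of_nonneg (Real.rpow_nonneg ht₀.le _)]
  exact mul_le_mul_of_nonneg_left
    (Real.rpow_le_rpow_of_nonpos hδ ht (by linarith)) hq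

theorem integrableOn_Ioc_rpow_neg_of_mul_sub_le {g : ℝ → ℝ} {a b c q : ℝ} (hq₀ : 0 ≤ q)
    (hq₁ : q < 1) (hc : 0 < c) (hg : AEMeasurable g (volume.restrict (Set.Ioc a b)))
    (hle : ∀ s ∈ Set.Ioc a b, c * (s - a) ≤ g s) :
    IntegrableOn (fun s => g s ^ (-q)) (Set.Ioc a b) := by
  have hdom : IntegrableOn (fun s => c ^ (-q) * (s - a) ^ (-q)) (Set.Ioc a b) := by
    have h := ((intervalIntegral.intervalIntegrable_rpow' (a := 0) (b := b - a)
      (by linarith : -1 < -q)).comp_sub_right a).const_mul (c ^ (-q))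
    simp only [zero_add, sub_add_cancel] at h
    exact h.1
  refine hdom.mono' (hg.pow_const _).aestronglyMeasurable
    (ae_restrict_of_forall_mem measurableSet_Ioc fun s hs => ?_)
  have hsub : 0 < s - a := sub_pos.2 hs.1
  have hlin : 0 < c * (s - a) := mul_pos hc hsub
  rw [Real.norm_of_nonneg (Real.rpow_nonneg (hlin.le.trans (hle s hs)) _),
    ← Real.mul_rpow hc.le hsub.le]
  exact Real.rpow_le_rpow_of_nonpos hlin (hle s hs) (by linarith)

theorem integrableOn_Ioc_rpow_neg_of_sq_sub_sq_le {g : ℝ → ℝ} {a b q : ℝ} (hq₀ : 0 ≤ q)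
    (hq₁ : q < 1) (ha : 0 < a) (hg : AEMeasurable g (volume.restrict (Set.Ioc a b)))
    (hle : ∀ s ∈ Set.Ioc a b, s ^ 2 - a ^ 2 ≤ g s) :
    IntegrableOn (fun s => g s ^ (-q)) (Set.Ioc a b) := by
  refine integrableOn_Ioc_rpow_neg_of_mul_sub_le hq₀ hq₁ ha hg fun s hs => ?_
  calc a * (s - a) ≤ (s + a) * (s - a) := by
        gcongr
        · exact sub_nonneg.2 hs.1.le
        · linarith [hs.1]
    _ = s ^ 2 - a ^ 2 := by ring
    _ ≤ g s := hle s hs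

theorem integrableOn_Ioi_rpow_neg_sub_rpow_neg_of_mul_sq_le {g h : ℝ → ℝ} {b c K q : ℝ}
    (hq : 0 ≤ q) (hb : 0 < b) (hc : 0 < c)
    (hg : AEMeasurable g (volume.restrict (Set.Ioi b)))
    (hh : AEMeasurable h (volume.restrict (Set.Ioi b)))
    (hcg : ∀ s ∈ Set.Ioi b, c * s ^ 2 ≤ g s) (hch : ∀ s ∈ Set.Ioi b, c * s ^ 2 ≤ h s)
    (hK : ∀ s ∈ Set.Ioi b, |g s - h s| ≤ K) :
    IntegrableOn (fun s => g s ^ (-q) - h s ^ (-q)) (Set.Ioi b) := by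
  have hdom : IntegrableOn (fun s : ℝ => q * c ^ (-q - 1) * K * s ^ (2 * (-q - 1))) (Set.Ioi b) :=
    (integrableOn_Ioi_rpow_of_lt (by linarith) hb).const_mul _
  refine hdom.mono' ((hg.pow_const _).sub (hh.pow_const _)).aestronglyMeasurable
    (ae_restrict_of_forall_mem measurableSet_Ioi fun s hs => ?_)
  have hs₀ : 0 < s := hb.trans hs
  have hpow : (c * s ^ 2) ^ (-q - 1) = c ^ (-q - 1) * s ^ (2 * (-q - 1)) := by
    rw [Real.mul_rpow hc.le (sq_nonneg s), Real.rpow_mul hs₀.le, Real.rpow_two]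
  calc |g s ^ (-q) - h s ^ (-q)|
      ≤ q * (c * s ^ 2) ^ (-q - 1) * |g s - h s| :=
        abs_rpow_neg_sub_rpow_neg_le hq (by positivity) (hcg s hs) (hch s hs)
    _ ≤ q * (c * s ^ 2) ^ (-q - 1) * K := by gcongr; exact hK s hs
    _ = q * c ^ (-q - 1) * K * s ^ (2 * (-q - 1)) := by rw [hpow]; ring

theorem continuous_one_add_sq_rpow (q : ℝ) : Continuous fun s : ℝ => (1 + s ^ 2) ^ q :=
  Continuous.rpow_const (by fun_prop) fun s => .inl (by positivity)

theorem integrableOn_Ioi_rpow_neg_sub_one_add_sq_rpow_neg {g : ℝ → ℝ} {a K q : ℝ}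
    (hq₀ : 0 ≤ q) (hq₁ : q < 1) (ha : 0 < a)
    (hg : AEMeasurable g (volume.restrict (Set.Ioi a)))
    (hlow : ∀ s ∈ Set.Ioi a, s ^ 2 - a ^ 2 ≤ g s)
    (hK : ∀ s ∈ Set.Ioi a, |g s - (1 + s ^ 2)| ≤ K) :
    IntegrableOn (fun s => g s ^ (-q) - (1 + s ^ 2) ^ (-q)) (Set.Ioi a) := by
  have ha₂ : a < 2 * a := by linarith
  have htail : Set.Ioi (2 * a) ⊆ Set.Ioi a := Set.Ioi_subset_Ioi ha₂.le
  rw [← Set.Ioc_union_Ioi_eq_Ioi ha₂.le]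
  refine IntegrableOn.union (Integrable.sub ?_ (continuous_one_add_sq_rpow _).integrableOn_Ioc) ?_
  · exact integrableOn_Ioc_rpow_neg_of_sq_sub_sq_le hq₀ hq₁ ha
      (hg.mono_set Set.Ioc_subset_Ioi_self) fun s hs => hlow s hs.1
  · refine integrableOn_Ioi_rpow_neg_sub_rpow_neg_of_mul_sq_le (c := 1 / 4) hq₀ (by linarith)
      (by norm_num) (hg.mono_set htail) (by fun_prop) (fun s hs => ?_) (fun s _ => ?_)
      fun s hs => hK s (htail hs)
    · nlinarith [hlow s (htail hs), Set.mem_Ioi.1 hs]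
    · nlinarith [sq_nonneg s]

theorem exists_pos_tendsto_exp_neg_integral_div {g h : ℝ → ℝ} {a b : ℝ}
    (hh : ∀ c d, IntervalIntegrable h volume c d)
    (hgh : IntegrableOn (fun s => g s - h s) (Set.Ioi a)) :
    ∃ L : ℝ, 0 < L ∧ Tendsto
      (fun r => Real.exp (-∫ s in a..r, g s) / Real.exp (-∫ s in b..r, h s)) atTop (nhds L) := by
  have hlim := (intervalIntegral_tendsto_integral_Ioi a hgh tendsto_id).neg.add_const
    (∫ s in b..a, h s)
  refine ⟨_, Real.exp_pos _, ((Real.continuous_exp.tendsto _).comp hlim).congr' ?_⟩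
  filter_upwards [eventually_ge_atTop a] with r hr
  have hsub : IntervalIntegrable (fun s => g s - h s) volume a r :=
    (intervalIntegrable_iff_integrableOn_Ioc_of_le hr).2 (hgh.mono_set Set.Ioc_subset_Ioi_self)
  have hg : ∫ s in a..r, g s = (∫ s in a..r, (g s - h s)) + ∫ s in a..r, h s := by
    rw [← intervalIntegral.integral_add hsub (hh a r)]
    simp only [sub_add_cancel]
  rw [Function.comp_apply, id, ← Real.exp_sub, hg,
    ← intervalIntegral.integral_add_adjacent_intervals (hh b a) (hh a r)]
  congr 1
  ring

theorem div_rpow_le_one_add_sq_of_root {M p a s : ℝ} (hp : 0 ≤ p) (ha : 0 < a)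
    (hroot : a ^ (p + 2) + a ^ p = M) (has : a ≤ s) : M / s ^ p ≤ 1 + a ^ 2 := by
  rw [div_le_iff₀ (Real.rpow_pos_of_pos (ha.trans_le has) p)]
  calc M = (1 + a ^ 2) * a ^ p := by rw [← hroot, Real.rpow_add ha, Real.rpow_two]; ring
    _ ≤ (1 + a ^ 2) * s ^ p := by gcongr

theorem stmt_14_general {p m r₀ : ℝ} {f fm : ℝ → ℝ} (hp : 0 ≤ p)
    (hf : ∀ s, f s = 1 + s ^ 2) (hfm : ∀ s, 0 < s → fm s = 1 + s ^ 2 - 2 * m / s ^ p)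
    (hr₀ : 0 < r₀) (hroot : r₀ ^ (p + 2) + r₀ ^ p = 2 * m) :
    (∀ r, r₀ < r → IntegrableOn (fun s => fm s ^ (-(1 / 2) : ℝ)) (Set.Ioc r₀ r)) ∧
    ∃ L : ℝ, 0 < L ∧ Tendsto
      (fun r => Real.exp (-(∫ s in r₀..r, fm s ^ (-(1 / 2) : ℝ))) /
        Real.exp (-(∫ s in (0 : ℝ)..r, f s ^ (-(1 / 2) : ℝ)))) atTop (nhds L) := by
  obtain rfl : f = fun s => 1 + s ^ 2 := funext hf
  have hfm' : ∀ s ∈ Set.Ioi r₀, fm s = 1 + s ^ 2 - 2 * m / s ^ p :=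
    fun s hs => hfm s (hr₀.trans hs)
  have hmeas : AEMeasurable fm (volume.restrict (Set.Ioi r₀)) :=
    (by fun_prop : Measurable fun s : ℝ => 1 + s ^ 2 - 2 * m / s ^ p).aemeasurable.congr
      (ae_restrict_of_forall_mem measurableSet_Ioi fun s hs => (hfm' s hs).symm)
  have hmass_le : ∀ s ∈ Set.Ioi r₀, 2 * m / s ^ p ≤ 1 + r₀ ^ 2 :=
    fun s hs => div_rpow_le_one_add_sq_of_root hp hr₀ hroot (le_of_lt hs)
  have hmass_nonneg : ∀ s ∈ Set.Ioi r₀, 0 ≤ 2 * m / s ^ p := fun s hs => by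
    have : 0 < s := hr₀.trans hs
    rw [← hroot]
    positivity
  have hlow : ∀ s ∈ Set.Ioi r₀, s ^ 2 - r₀ ^ 2 ≤ fm s := fun s hs => by
    linarith [hfm' s hs, hmass_le s hs]
  have hclose : ∀ s ∈ Set.Ioi r₀, |fm s - (1 + s ^ 2)| ≤ 1 + r₀ ^ 2 := fun s hs => by
    rw [hfm' s hs, sub_sub_cancel_left, abs_neg, abs_of_nonneg (hmass_nonneg s hs)]
    exact hmass_le s hs
  constructor
  · exact fun r _ => integrableOn_Ioc_rpow_neg_of_sq_sub_sq_le (by norm_num) (by norm_num) hr₀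
      (hmeas.mono_set Set.Ioc_subset_Ioi_self) fun s hs => hlow s hs.1
  · exact exists_pos_tendsto_exp_neg_integral_div
      (fun c d => (continuous_one_add_sq_rpow _).intervalIntegrable c d)
      (integrableOn_Ioi_rpow_neg_sub_one_add_sq_rpow_neg (by norm_num) (by norm_num) hr₀ hmeas
        hlow hclose)

theorem stmt_14 (n : ℕ) (hn : 3 ≤ n) (m : ℝ) (hm : 0 < m)
    (f fm : ℝ → ℝ)
    (hf : ∀ s : ℝ, f s = 1 + s^2)
    (hfm : ∀ s : ℝ, 0 < s → fm s = 1 + s^2 - 2*m/s^(n-2))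
    (r₀ : ℝ) (hr₀ : 0 < r₀) (hroot : r₀^n + r₀^(n-2) = 2*m) :
    (∀ r : ℝ, r₀ < r →
      IntegrableOn (fun s : ℝ => fm s ^ (-(1/2) : ℝ)) (Set.Ioc r₀ r)) ∧
    ∃ L : ℝ, 0 < L ∧
      Tendsto (fun r : ℝ =>
          Real.exp (-(∫ s in r₀..r, fm s ^ (-(1/2) : ℝ))) /
          Real.exp (-(∫ s in (0 : ℝ)..r, f s ^ (-(1/2) : ℝ))))
        atTop (nhds L) := by
  have hexp : ((n - 2 : ℕ) : ℝ) + 2 = n := by exact_mod_cast Nat.sub_add_cancel (by omega : 2 ≤ n)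
  exact stmt_14_general (p := (n - 2 : ℕ)) (Nat.cast_nonneg _) hf
    (by simpa only [Real.rpow_natCast] using hfm) hr₀
    (by simpa only [hexp, Real.rpow_natCast] using hroot)
end

section
/- Let n ≥ 3 be an integer and m > 0 a real number. Define f_m(s) := 1 + s² − 2m/s^(n−2) for s > 0, let r⋆ be the unique positive real with r⋆^n + r⋆^(n−2) = 2m, and define x_m(r) := exp(−∫_{r⋆}^r f_m(s)^(−1/2) ds) for r > r⋆. Then x_m is strictly decreasing on (r⋆, ∞), takes values in the open interval (0, 1), and maps (r⋆, ∞) bijectively onto (0, 1). -/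
/-!
The integrand `f ^ (-1/2)` is controlled at both ends of `(r₀, ∞)`. At the horizon
`f s ≥ s ^ 2 - r₀ ^ 2` is at least linear in `s - r₀`, so the singularity is integrable; at
infinity `f s ≤ (s + C) ^ 2`, so the integral grows at least logarithmically. Hence
`r ↦ ∫ s in r₀..r, f s ^ (-1/2)` is a continuous increasing bijection of `(r₀, ∞)` onto `(0, ∞)`,
and `t ↦ exp (-t)` carries `(0, ∞)` decreasingly onto `(0, 1)`.
-/

open Filter MeasureTheory Set

theorem bijOn_exp_neg_Ioi_Ioo : BijOn (fun t : ℝ => Real.exp (-t)) (Ioi 0) (Ioo 0 1) := by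
  refine ⟨fun t ht => ⟨Real.exp_pos _, Real.exp_lt_one_iff.2 (neg_lt_zero.2 ht)⟩,
    (Real.exp_injective.comp neg_injective).injOn, fun y hy => ?_⟩
  refine ⟨-Real.log y, neg_pos.2 (Real.log_neg hy.1 hy.2), ?_⟩
  simp only [neg_neg, Real.exp_log hy.1]

section Primitive

variable {g h : ℝ → ℝ} {a : ℝ}

theorem strictMonoOn_integral_of_pos (hg : ∀ r, a ≤ r → IntervalIntegrable g volume a r)
    (hpos : ∀ s, a < s → 0 < g s) : StrictMonoOn (fun r => ∫ s in a..r, g s) (Ici a) := by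
  intro b hb c hc hbc
  have hint : IntervalIntegrable g volume b c := (hg b hb).symm.trans (hg c hc)
  have hbc_pos : 0 < ∫ s in b..c, g s :=
    intervalIntegral.intervalIntegral_pos_of_pos_on hint
      (fun s hs => hpos s (lt_of_le_of_lt hb hs.1)) hbc
  have hadd := intervalIntegral.integral_add_adjacent_intervals (hg b hb) hint
  dsimp only
  linarith

theorem continuousOn_integral_Ici (hg : ∀ r, a ≤ r → IntervalIntegrable g volume a r) :
    ContinuousOn (fun r => ∫ s in a..r, g s) (Ici a) := by
  intro r hr
  have hr' : a ≤ r + 1 := by linarith [mem_Ici.1 hr]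
  have hcont : ContinuousOn (fun r => ∫ s in a..r, g s) (Icc a (r + 1)) := by
    simpa only [uIcc_of_le hr'] using
      intervalIntegral.continuousOn_primitive_interval' (hg _ hr') left_mem_uIcc
  refine (hcont r ⟨hr, by linarith⟩).mono_of_mem_nhdsWithin ?_
  rw [← Ici_inter_Iic]
  exact inter_mem self_mem_nhdsWithin (mem_nhdsWithin_of_mem_nhds (Iic_mem_nhds (by linarith)))

theorem bijOn_integral_Ioi (hg : ∀ r, a ≤ r → IntervalIntegrable g volume a r)
    (hpos : ∀ s, a < s → 0 < g s) (hlim : Tendsto (fun r => ∫ s in a..r, g s) atTop atTop) :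
    BijOn (fun r => ∫ s in a..r, g s) (Ioi a) (Ioi 0) := by
  have hmono := strictMonoOn_integral_of_pos hg hpos
  have hzero : ∫ s in a..a, g s = 0 := intervalIntegral.integral_same
  refine ⟨fun r hr => ?_, (hmono.mono Ioi_subset_Ici_self).injOn, fun t ht => ?_⟩
  · simpa only [hzero, mem_Ioi] using hmono self_mem_Ici (Ioi_subset_Ici_self hr) hr
  · obtain ⟨r, hr, rfl⟩ : t ∈ (fun r => ∫ s in a..r, g s) '' Ici a :=
      isPreconnected_Ici.intermediate_value_Ici self_mem_Ici
        (le_principal_iff.2 (Ici_mem_atTop a)) (continuousOn_integral_Ici hg) hlim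
        (by simpa only [hzero] using Ioi_subset_Ici_self ht)
    refine ⟨r, mem_Ioi.2 (lt_of_le_of_ne hr ?_), rfl⟩
    rintro rfl
    exact (mem_Ioi.1 ht).ne' hzero

theorem strictAntiOn_exp_neg_integral (hg : ∀ r, a ≤ r → IntervalIntegrable g volume a r)
    (hpos : ∀ s, a < s → 0 < g s) :
    StrictAntiOn (fun r => Real.exp (-∫ s in a..r, g s)) (Ici a) :=
  fun _ hb _ hc hbc =>
    Real.exp_lt_exp.2 (neg_lt_neg (strictMonoOn_integral_of_pos hg hpos hb hc hbc))

theorem bijOn_exp_neg_integral (hg : ∀ r, a ≤ r → IntervalIntegrable g volume a r)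
    (hpos : ∀ s, a < s → 0 < g s) (hlim : Tendsto (fun r => ∫ s in a..r, g s) atTop atTop) :
    BijOn (fun r => Real.exp (-∫ s in a..r, g s)) (Ioi a) (Ioo 0 1) :=
  bijOn_exp_neg_Ioi_Ioo.comp (bijOn_integral_Ioi hg hpos hlim)

theorem tendsto_integral_atTop_of_le (hh : ∀ r, a ≤ r → IntervalIntegrable h volume a r)
    (hg : ∀ r, a ≤ r → IntervalIntegrable g volume a r) (hle : ∀ s, a < s → h s ≤ g s)
    (hlim : Tendsto (fun r => ∫ s in a..r, h s) atTop atTop) :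
    Tendsto (fun r => ∫ s in a..r, g s) atTop atTop := by
  refine tendsto_atTop_mono' _ ?_ hlim
  filter_upwards [eventually_ge_atTop a] with r hr
  exact intervalIntegral.integral_mono_on_of_le_Ioo hr (hh r hr) (hg r hr) fun s hs => hle s hs.1

end Primitive

section Logarithmic

variable {a c r : ℝ}

theorem intervalIntegrable_inv_add (hac : 0 < a + c) (hr : a ≤ r) :
    IntervalIntegrable (fun s => (s + c)⁻¹) volume a r := by
  refine (ContinuousOn.inv₀ (by fun_prop) fun s hs => ?_).intervalIntegrable
  rw [uIcc_of_le hr] at hs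
  linarith [hs.1]

theorem tendsto_integral_inv_add_atTop (hac : 0 < a + c) :
    Tendsto (fun r => ∫ s in a..r, (s + c)⁻¹) atTop atTop := by
  have hlog : Tendsto (fun r => Real.log ((r + c) / (a + c))) atTop atTop :=
    Real.tendsto_log_atTop.comp
      ((tendsto_atTop_add_const_right _ c tendsto_id).atTop_div_const hac)
  refine hlog.congr' ?_
  filter_upwards [eventually_ge_atTop a] with r hr
  rw [intervalIntegral.integral_comp_add_right (fun s => s⁻¹),
    integral_inv_of_pos hac (by linarith)]

end Logarithmic

section Rpow

variable {f : ℝ → ℝ} {a c : ℝ}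

theorem intervalIntegrable_rpow_of_linear_le {p r : ℝ} (hp : -1 < p) (hp' : p ≤ 0) (hc : 0 < c)
    (hf : ContinuousOn f (Ioi a)) (hle : ∀ s, a < s → c * (s - a) ≤ f s) (hr : a ≤ r) :
    IntervalIntegrable (fun s => f s ^ p) volume a r := by
  have hlin_pos : ∀ s, a < s → 0 < c * (s - a) := fun s hs => mul_pos hc (sub_pos.2 hs)
  have hpos : ∀ s, a < s → 0 < f s := fun s hs => (hlin_pos s hs).trans_le (hle s hs)
  have hcont : ContinuousOn (fun s => f s ^ p) (Ioi a) :=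
    hf.rpow_const fun s hs => Or.inl (hpos s hs).ne'
  have hmajorant : IntervalIntegrable (fun s => c ^ p * (s - a) ^ p) volume a r := by
    simpa only [zero_add, sub_add_cancel] using
      ((intervalIntegral.intervalIntegrable_rpow' (a := 0) (b := r - a) hp).comp_sub_right
        a).const_mul (c ^ p)
  refine hmajorant.mono_fun' ?_ ?_ <;> rw [uIoc_of_le hr]
  · exact (hcont.mono fun s hs => hs.1).aestronglyMeasurable measurableSet_Ioc
  · filter_upwards [ae_restrict_mem measurableSet_Ioc] with s hs
    rw [Real.norm_of_nonneg (Real.rpow_nonneg (hpos s hs.1).le p),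
      ← Real.mul_rpow hc.le (sub_pos.2 hs.1).le]
    exact Real.rpow_le_rpow_of_nonpos (hlin_pos s hs.1) (hle s hs.1) hp'

theorem inv_le_rpow_neg_half {x y : ℝ} (hx : 0 < x) (hy : 0 ≤ y) (hxy : x ≤ y ^ 2) :
    y⁻¹ ≤ x ^ (-(1 / 2) : ℝ) := by
  rw [Real.rpow_neg hx.le, ← Real.sqrt_eq_rpow]
  exact inv_anti₀ (Real.sqrt_pos.2 hx) (Real.sqrt_le_iff.2 ⟨hy, hxy⟩)

theorem tendsto_integral_rpow_neg_half_atTop (hac : 0 < a + c)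
    (hint : ∀ r, a ≤ r → IntervalIntegrable (fun s => f s ^ (-(1 / 2) : ℝ)) volume a r)
    (hpos : ∀ s, a < s → 0 < f s) (hle : ∀ s, a < s → f s ≤ (s + c) ^ 2) :
    Tendsto (fun r => ∫ s in a..r, f s ^ (-(1 / 2) : ℝ)) atTop atTop :=
  tendsto_integral_atTop_of_le (fun _ => intervalIntegrable_inv_add hac) hint
    (fun s hs => inv_le_rpow_neg_half (hpos s hs) (by linarith) (hle s hs))
    (tendsto_integral_inv_add_atTop hac)

end Rpow

/-- The metric coefficient of the Kottler (Schwarzschild–Anti-de Sitter) metric of mass `m` and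
radius `1`, whose horizon has dimension `k + 1` and curvature normalised to `κ`. The coefficient
`f_m` in spatial dimension `n` is the case `κ = 1`, `k = n - 2`. -/
noncomputable def kottlerCoeff (k : ℕ) (κ m s : ℝ) : ℝ := κ + s ^ 2 - 2 * m / s ^ k

section Kottler

variable {k : ℕ} {κ m r₀ s : ℝ}

theorem continuousOn_kottlerCoeff : ContinuousOn (kottlerCoeff k κ m) (Ioi 0) :=
  ContinuousOn.sub (by fun_prop)
    (continuousOn_const.div (by fun_prop) fun _ hs => pow_ne_zero k (mem_Ioi.1 hs).ne')

theorem sq_sub_sq_le_kottlerCoeff (hm : 0 ≤ m) (hr₀ : 0 < r₀)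
    (hroot : r₀ ^ (k + 2) + κ * r₀ ^ k = 2 * m) (hs : r₀ < s) :
    s ^ 2 - r₀ ^ 2 ≤ kottlerCoeff k κ m s := by
  have hs₀ : 0 < s := hr₀.trans hs
  have hmass : 2 * m = (κ + r₀ ^ 2) * r₀ ^ k := by rw [← hroot]; ring
  have hcoeff : 0 ≤ κ + r₀ ^ 2 :=
    nonneg_of_mul_nonneg_left (by rw [← hmass]; positivity) (pow_pos hr₀ k)
  have hdiv : 2 * m / s ^ k ≤ κ + r₀ ^ 2 := by
    rw [div_le_iff₀ (pow_pos hs₀ k), hmass]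
    gcongr
  rw [kottlerCoeff]
  linarith

theorem linear_le_kottlerCoeff (hm : 0 ≤ m) (hr₀ : 0 < r₀)
    (hroot : r₀ ^ (k + 2) + κ * r₀ ^ k = 2 * m) (hs : r₀ < s) :
    r₀ * (s - r₀) ≤ kottlerCoeff k κ m s := by
  refine le_trans ?_ (sq_sub_sq_le_kottlerCoeff hm hr₀ hroot hs)
  nlinarith

theorem kottlerCoeff_le_sq (hm : 0 ≤ m) (hs : 0 < s) :
    kottlerCoeff k κ m s ≤ (s + (|κ| + 1)) ^ 2 := by
  have hdiv : 0 ≤ 2 * m / s ^ k := by positivity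
  have hκ : κ ≤ |κ| := le_abs_self κ
  rw [kottlerCoeff]
  nlinarith [abs_nonneg κ, mul_nonneg hs.le (abs_nonneg κ)]

end Kottler

theorem stmt_15_general (k : ℕ) (κ m : ℝ) (hm : 0 ≤ m) (r₀ : ℝ) (hr₀ : 0 < r₀)
    (hroot : r₀ ^ (k + 2) + κ * r₀ ^ k = 2 * m)
    (f : ℝ → ℝ) (hf : EqOn f (kottlerCoeff k κ m) (Ioi r₀)) :
    StrictAntiOn (fun r => Real.exp (-∫ s in r₀..r, f s ^ (-(1 / 2) : ℝ))) (Ioi r₀) ∧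
      BijOn (fun r => Real.exp (-∫ s in r₀..r, f s ^ (-(1 / 2) : ℝ))) (Ioi r₀) (Ioo 0 1) := by
  have hcont : ContinuousOn f (Ioi r₀) :=
    (continuousOn_kottlerCoeff.mono (Ioi_subset_Ioi hr₀.le)).congr hf
  have hlower : ∀ s, r₀ < s → r₀ * (s - r₀) ≤ f s := fun s hs =>
    (linear_le_kottlerCoeff hm hr₀ hroot hs).trans_eq (hf hs).symm
  have hupper : ∀ s, r₀ < s → f s ≤ (s + (|κ| + 1)) ^ 2 := fun s hs =>
    (hf hs).trans_le (kottlerCoeff_le_sq hm (hr₀.trans hs))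
  have hpos : ∀ s, r₀ < s → 0 < f s := fun s hs =>
    (mul_pos hr₀ (sub_pos.2 hs)).trans_le (hlower s hs)
  have hpos' : ∀ s, r₀ < s → 0 < f s ^ (-(1 / 2) : ℝ) := fun s hs =>
    Real.rpow_pos_of_pos (hpos s hs) _
  have hint : ∀ r, r₀ ≤ r → IntervalIntegrable (fun s => f s ^ (-(1 / 2) : ℝ)) volume r₀ r :=
    fun _ => intervalIntegrable_rpow_of_linear_le (by norm_num) (by norm_num) hr₀ hcont hlower
  have hlim := tendsto_integral_rpow_neg_half_atTop (by positivity) hint hpos hupper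
  exact ⟨(strictAntiOn_exp_neg_integral hint hpos').mono Ioi_subset_Ici_self,
    bijOn_exp_neg_integral hint hpos' hlim⟩

theorem stmt_15 (n : ℕ) (hn : 3 ≤ n) (m : ℝ) (hm : 0 < m)
    (fm : ℝ → ℝ)
    (hfm : ∀ s : ℝ, 0 < s → fm s = 1 + s^2 - 2*m/s^(n-2))
    (r₀ : ℝ) (hr₀ : 0 < r₀) (hroot : r₀^n + r₀^(n-2) = 2*m)
    (xm : ℝ → ℝ)
    (hxm : ∀ r : ℝ, xm r = Real.exp (-(∫ s in r₀..r, fm s ^ (-(1/2) : ℝ)))) :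
    StrictAntiOn xm (Set.Ioi r₀) ∧
    (∀ r : ℝ, r₀ < r → xm r ∈ Set.Ioo (0 : ℝ) 1) ∧
    Set.BijOn xm (Set.Ioi r₀) (Set.Ioo (0 : ℝ) 1) := by
  obtain rfl := funext hxm
  have hroot' : r₀ ^ (n - 2 + 2) + 1 * r₀ ^ (n - 2) = 2 * m := by
    rwa [Nat.sub_add_cancel (by lia), one_mul]
  obtain ⟨hanti, hbij⟩ := stmt_15_general (n - 2) 1 m hm.le r₀ hr₀ hroot' fm
    fun s hs => hfm s (hr₀.trans hs)
  exact ⟨hanti, fun _ hr => hbij.mapsTo hr, hbij⟩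
end

section
/- Let m > 0 be a real number, define f_m(s) := 1 + s² − 2m/s² for s > 0, and let r⋆ be the unique positive real with r⋆⁴ + r⋆² = 2m. Then for every r > r⋆, the function s ↦ f_m(s)^(−1/2) is integrable on (r⋆, r], and exp(−∫_{r⋆}^r f_m(s)^(−1/2) ds) = √((2r⋆² + 1) / (2r·√(f_m(r)) + 2r² + 1)). -/
open MeasureTheory

/-!
Write `f s = k + s² - 2m/s²` and `D s = 2s√(f s) + 2s² + k`. Since `s f' s + 2 f s = 4s² + 2k`, the
function `D` satisfies `D' = 2 D / √f` wherever `f > 0`, so `(log D) / 2` is a primitive of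
`f ^ (-1/2)`. It is continuous up to the zero `r₀` of `f`, where `D r₀ = 2r₀² + k`. As the integrand
is nonnegative, the fundamental theorem of calculus yields integrability together with the value of
the integral.
-/

open Set

/-- The metric coefficient `k + s² - 2m/s²` of the five-dimensional Schwarzschild–Anti-de Sitter
family of radius `1` and mass `m`, where `k` is the curvature of the horizon (`k = 1` for the
spherical black hole). It has the junk value `k` at `s = 0`. -/
noncomputable def metricCoeff (k m s : ℝ) : ℝ :=
  k + s ^ 2 - 2 * m / s ^ 2

/-- The denominator of the squared boundary defining function; half its logarithm is a primitive of
`metricCoeff k m ^ (-1/2)`. -/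
noncomputable def boundaryDenom (k m s : ℝ) : ℝ :=
  2 * s * √(metricCoeff k m s) + 2 * s ^ 2 + k

section Primitive

variable {k m r₀ r s : ℝ}

theorem metricCoeff_eq_of_horizon (hs : s ≠ 0) (hroot : r₀ ^ 4 + k * r₀ ^ 2 = 2 * m) :
    metricCoeff k m s = (s ^ 2 - r₀ ^ 2) * (s ^ 2 + r₀ ^ 2 + k) / s ^ 2 := by
  rw [metricCoeff, ← hroot]
  field_simp
  ring

theorem metricCoeff_horizon (hr₀ : r₀ ≠ 0) (hroot : r₀ ^ 4 + k * r₀ ^ 2 = 2 * m) :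
    metricCoeff k m r₀ = 0 := by
  simp [metricCoeff_eq_of_horizon hr₀ hroot]

theorem metricCoeff_pos (hr₀ : 0 < r₀) (hroot : r₀ ^ 4 + k * r₀ ^ 2 = 2 * m)
    (hk : 0 < 2 * r₀ ^ 2 + k) (hs : r₀ < s) : 0 < metricCoeff k m s := by
  have hs₀ : 0 < s := hr₀.trans hs
  have hsq : r₀ ^ 2 < s ^ 2 := by gcongr
  rw [metricCoeff_eq_of_horizon hs₀.ne' hroot]
  exact div_pos (mul_pos (by linarith) (by linarith)) (by positivity)

theorem hasDerivAt_metricCoeff (k m : ℝ) (hs : s ≠ 0) :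
    HasDerivAt (metricCoeff k m) (2 * s + 4 * m / s ^ 3) s := by
  have hsq : HasDerivAt (fun t : ℝ => t ^ 2) (2 * s) s := by
    simpa using hasDerivAt_pow 2 s
  refine ((hsq.const_add k).sub
    ((hasDerivAt_const s (2 * m)).div hsq (pow_ne_zero 2 hs))).congr_deriv ?_
  field_simp
  ring

theorem boundaryDenom_horizon (hr₀ : r₀ ≠ 0) (hroot : r₀ ^ 4 + k * r₀ ^ 2 = 2 * m) :
    boundaryDenom k m r₀ = 2 * r₀ ^ 2 + k := by
  simp [boundaryDenom, metricCoeff_horizon hr₀ hroot]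

theorem boundaryDenom_pos (m : ℝ) (hr₀ : 0 < r₀) (hk : 0 < 2 * r₀ ^ 2 + k) (hs : r₀ ≤ s) :
    0 < boundaryDenom k m s := by
  have hs₀ : 0 < s := hr₀.trans_le hs
  have hsq : r₀ ^ 2 ≤ s ^ 2 := by gcongr
  have hsqrt : 0 ≤ 2 * s * √(metricCoeff k m s) := by positivity
  rw [boundaryDenom]
  linarith

theorem continuousAt_boundaryDenom (k m : ℝ) (hs : s ≠ 0) :
    ContinuousAt (boundaryDenom k m) s := by
  have hf : ContinuousAt (metricCoeff k m) s := (hasDerivAt_metricCoeff k m hs).continuousAt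
  unfold boundaryDenom
  fun_prop

theorem hasDerivAt_boundaryDenom (hs : s ≠ 0) (hf : 0 < metricCoeff k m s) :
    HasDerivAt (boundaryDenom k m) (2 * boundaryDenom k m s / √(metricCoeff k m s)) s := by
  have deriv_identity :
      s * (2 * s + 4 * m / s ^ 3) + 2 * metricCoeff k m s = 4 * s ^ 2 + 2 * k := by
    rw [metricCoeff]
    field_simp
    ring
  have hsqrt := (hasDerivAt_metricCoeff k m hs).sqrt hf.ne'
  have hlin : HasDerivAt (fun t : ℝ => 2 * t) 2 s := by
    simpa using (hasDerivAt_id s).const_mul 2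
  have hquad : HasDerivAt (fun t : ℝ => 2 * t ^ 2) (2 * (2 * s)) s := by
    simpa using (hasDerivAt_pow 2 s).const_mul 2
  refine (((hlin.mul hsqrt).add hquad).add_const k).congr_deriv ?_
  have hsqrt_ne : √(metricCoeff k m s) ≠ 0 := (Real.sqrt_pos.2 hf).ne'
  have hsq : √(metricCoeff k m s) ^ 2 = metricCoeff k m s := Real.sq_sqrt hf.le
  rw [boundaryDenom]
  generalize √(metricCoeff k m s) = q at *
  generalize 2 * s + 4 * m / s ^ 3 = f' at *
  field_simp
  linear_combination deriv_identity + 2 * hsq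

theorem hasDerivAt_half_log_boundaryDenom (hs : s ≠ 0) (hf : 0 < metricCoeff k m s)
    (hD : boundaryDenom k m s ≠ 0) :
    HasDerivAt (fun t => Real.log (boundaryDenom k m t) / 2)
      (metricCoeff k m s ^ (-(1 / 2) : ℝ)) s := by
  refine (((hasDerivAt_boundaryDenom hs hf).log hD).div_const 2).congr_deriv ?_
  rw [Real.rpow_neg hf.le, ← Real.sqrt_eq_rpow]
  field_simp

theorem continuousOn_half_log_boundaryDenom (m : ℝ) (hr₀ : 0 < r₀) (hk : 0 < 2 * r₀ ^ 2 + k) :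
    ContinuousOn (fun s => Real.log (boundaryDenom k m s) / 2) (Ici r₀) :=
  fun _ hs => (((continuousAt_boundaryDenom k m (hr₀.trans_le hs).ne').log
    (boundaryDenom_pos m hr₀ hk hs).ne').div_const 2).continuousWithinAt

theorem hasDerivAt_half_log_boundaryDenom_of_horizon_lt (hr₀ : 0 < r₀)
    (hroot : r₀ ^ 4 + k * r₀ ^ 2 = 2 * m) (hk : 0 < 2 * r₀ ^ 2 + k) (hs : r₀ < s) :
    HasDerivAt (fun t => Real.log (boundaryDenom k m t) / 2)
      (metricCoeff k m s ^ (-(1 / 2) : ℝ)) s :=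
  hasDerivAt_half_log_boundaryDenom (hr₀.trans hs).ne' (metricCoeff_pos hr₀ hroot hk hs)
    (boundaryDenom_pos m hr₀ hk hs.le).ne'

theorem integrableOn_metricCoeff_rpow (hr₀ : 0 < r₀) (hroot : r₀ ^ 4 + k * r₀ ^ 2 = 2 * m)
    (hk : 0 < 2 * r₀ ^ 2 + k) (r : ℝ) :
    IntegrableOn (fun s => metricCoeff k m s ^ (-(1 / 2) : ℝ)) (Ioc r₀ r) :=
  intervalIntegral.integrableOn_deriv_of_nonneg
    ((continuousOn_half_log_boundaryDenom m hr₀ hk).mono Icc_subset_Ici_self)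
    (fun _ hs => hasDerivAt_half_log_boundaryDenom_of_horizon_lt hr₀ hroot hk hs.1)
    fun _ hs => Real.rpow_nonneg (metricCoeff_pos hr₀ hroot hk hs.1).le _

theorem integral_metricCoeff_rpow (hr₀ : 0 < r₀) (hroot : r₀ ^ 4 + k * r₀ ^ 2 = 2 * m)
    (hk : 0 < 2 * r₀ ^ 2 + k) (hr : r₀ ≤ r) :
    ∫ s in r₀..r, metricCoeff k m s ^ (-(1 / 2) : ℝ) =
      Real.log (boundaryDenom k m r) / 2 - Real.log (2 * r₀ ^ 2 + k) / 2 := by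
  rw [intervalIntegral.integral_eq_sub_of_hasDerivAt_of_le hr
    ((continuousOn_half_log_boundaryDenom m hr₀ hk).mono Icc_subset_Ici_self)
    (fun _ hs => hasDerivAt_half_log_boundaryDenom_of_horizon_lt hr₀ hroot hk hs.1)
    ((intervalIntegrable_iff_integrableOn_Ioc_of_le hr).2
      (integrableOn_metricCoeff_rpow hr₀ hroot hk r)),
    boundaryDenom_horizon hr₀.ne' hroot]

end Primitive

theorem exp_neg_half_log_sub_half_log {a b : ℝ} (ha : 0 < a) (hb : 0 < b) :
    Real.exp (-(Real.log b / 2 - Real.log a / 2)) = √(a / b) := by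
  rw [neg_sub, ← sub_div, Real.exp_half, ← Real.log_div ha.ne' hb.ne',
    Real.exp_log (div_pos ha hb)]

/-- The condition `0 < 2 * r₀ ^ 2 + k` says that `r₀` is a simple zero of `fm` and the largest. -/
theorem stmt_17_general (k m : ℝ) (fm : ℝ → ℝ)
    (hfm : ∀ s : ℝ, 0 < s → fm s = k + s ^ 2 - 2 * m / s ^ 2)
    (r₀ : ℝ) (hr₀ : 0 < r₀) (hroot : r₀ ^ 4 + k * r₀ ^ 2 = 2 * m) (hk : 0 < 2 * r₀ ^ 2 + k)
    (r : ℝ) (hr : r₀ ≤ r) :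
    IntegrableOn (fun s : ℝ => fm s ^ (-(1 / 2) : ℝ)) (Ioc r₀ r) ∧
      Real.exp (-(∫ s in r₀..r, fm s ^ (-(1 / 2) : ℝ))) =
        √((2 * r₀ ^ 2 + k) / (2 * r * √(fm r) + 2 * r ^ 2 + k)) := by
  have hcongr : EqOn (fun s => fm s ^ (-(1 / 2) : ℝ))
      (fun s => metricCoeff k m s ^ (-(1 / 2) : ℝ)) (Ioi 0) :=
    fun s hs => congrArg (· ^ (-(1 / 2) : ℝ)) (hfm s hs)
  refine ⟨(integrableOn_metricCoeff_rpow hr₀ hroot hk r).congr_fun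
    (fun s hs => (hcongr (hr₀.trans hs.1)).symm) measurableSet_Ioc, ?_⟩
  have hpos : uIcc r₀ r ⊆ Ioi 0 := by
    rw [uIcc_of_le hr]
    exact fun s hs => hr₀.trans_le hs.1
  rw [intervalIntegral.integral_congr (hcongr.mono hpos),
    integral_metricCoeff_rpow hr₀ hroot hk hr,
    exp_neg_half_log_sub_half_log hk (boundaryDenom_pos m hr₀ hk hr),
    hfm r (hr₀.trans_le hr), boundaryDenom, metricCoeff]

theorem stmt_17 (m : ℝ) (hm : 0 < m)
    (fm : ℝ → ℝ) (hfm : ∀ s : ℝ, 0 < s → fm s = 1 + s^2 - 2*m/s^2)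
    (r₀ : ℝ) (hr₀ : 0 < r₀) (hroot : r₀^4 + r₀^2 = 2*m) :
    ∀ r : ℝ, r₀ < r →
      IntegrableOn (fun s : ℝ => fm s ^ (-(1/2) : ℝ)) (Set.Ioc r₀ r) ∧
      Real.exp (-(∫ s in r₀..r, fm s ^ (-(1/2) : ℝ))) =
        Real.sqrt ((2*r₀^2 + 1) / (2*r*Real.sqrt (fm r) + 2*r^2 + 1)) :=
  fun r hr => stmt_17_general 1 m fm hfm r₀ hr₀ (by rwa [one_mul]) (by positivity) r hr.le
end

section
/- On ℝ³ with indices in {0, 1, 2}, let η be the Minkowski form with η₀₀ = −1, η₁₁ = η₂₂ = 1 and zero off-diagonal entries (its inverse η^{ij} has the same entries), and let ε_{ijk} be the totally antisymmetric symbol with ε₀₁₂ = 1. Let J : {0,1,2}³ → ℝ satisfy: J_{ijk} = −J_{jik}; J_{ijk} + J_{jki} + J_{kij} = 0; and Σ_{j,k} η^{jk} J_{ijk} = 0 for every i. Define Y_{ij} := (1/2) Σ_{k,l,a,b} η^{ka} η^{lb} ε_{iab} J_{klj}. Then Y is symmetric (Y_{ij} = Y_{ji} for all i, j) and η-trace-free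 (Σ_{i,j} η^{ij} Y_{ij} = 0). -/
/-!
In dimension three an antisymmetrisation over four indices vanishes, so the antisymmetric part of
`⋆J` can be rewritten in such a way that the inverse metric contracts the last two indices of `J`:
it is the contraction of `ε` with the trace of `J`. In the trace of `⋆J` all indices of `ε` are
raised, and since the result is cyclically invariant, only the cyclic part of `J` contributes.
-/

open Finset

theorem eq_rotate_of_antisymm {ι R : Type*} [InvolutiveNeg R] {ε : ι → ι → ι → R}
    (h₁ : ∀ i j k, ε i j k = -ε j i k) (h₂ : ∀ i j k, ε i j k = -ε i k j) (i j k : ι) :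
    ε i j k = ε j k i := by
  rw [h₁ i j k, h₂ j i k, neg_neg]

theorem schouten_identity {R : Type*} [CommRing R] [IsAddTorsionFree R]
    {ε : Fin 3 → Fin 3 → Fin 3 → R}
    (h₁ : ∀ i j k, ε i j k = -ε j i k) (h₂ : ∀ i j k, ε i j k = -ε i k j) (v : Fin 3 → R)
    (i j a b : Fin 3) :
    ε i a b * v j - ε j a b * v i = ε j i a * v b - ε j i b * v a := by
  have left_eq_zero (p q : Fin 3) : ε p p q = 0 := self_eq_neg.mp (h₁ p p q)
  have right_eq_zero (p q : Fin 3) : ε p q q = 0 := self_eq_neg.mp (h₂ p q q)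
  have outer_eq_zero (p q : Fin 3) : ε p q p = 0 := by rw [h₂, left_eq_zero, neg_zero]
  have pigeonhole : i = j ∨ i = a ∨ i = b ∨ j = a ∨ j = b ∨ a = b := by lia
  rcases pigeonhole with rfl | rfl | rfl | rfl | rfl | rfl
  · simp only [left_eq_zero]; ring
  · simp only [left_eq_zero, right_eq_zero, h₂ j i b]; ring
  · simp only [outer_eq_zero, right_eq_zero, h₂ j i a]; ring
  · simp only [left_eq_zero, outer_eq_zero, h₁ i j b]; ring
  · simp only [outer_eq_zero, eq_rotate_of_antisymm h₁ h₂ j i a]; ring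
  · simp only [right_eq_zero]; ring

section Contraction

variable {ι R : Type*} [Fintype ι] [CommRing R]

theorem sum_mul_eq_zero_of_cyclic [IsAddTorsionFree R] {F J : ι → ι → ι → R}
    (hF : ∀ i j k, F i j k = F j k i) (hJ : ∀ i j k, J i j k + J j k i + J k i j = 0) :
    ∑ i, ∑ j, ∑ k, F i j k * J i j k = 0 := by
  have sum_rotate (G : ι → ι → ι → R) : ∑ i, ∑ j, ∑ k, G j k i = ∑ i, ∑ j, ∑ k, G i j k :=
    sum_comm_cycle.symm
  have rotate_once : ∑ i, ∑ j, ∑ k, F i j k * J j k i = ∑ i, ∑ j, ∑ k, F i j k * J i j k := by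
    simpa only [← hF] using sum_rotate fun i j k => F i j k * J i j k
  have rotate_twice : ∑ i, ∑ j, ∑ k, F i j k * J k i j = ∑ i, ∑ j, ∑ k, F i j k * J i j k := by
    rw [← rotate_once]
    simpa only [← hF] using sum_rotate fun i j k => F i j k * J j k i
  have three_nsmul_eq_zero : 3 • ∑ i, ∑ j, ∑ k, F i j k * J i j k = 0 :=
    calc
      _ = ∑ i, ∑ j, ∑ k, F i j k * J i j k + ∑ i, ∑ j, ∑ k, F i j k * J j k i
          + ∑ i, ∑ j, ∑ k, F i j k * J k i j := by rw [rotate_once, rotate_twice]; ring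
      _ = 0 := by simp only [← sum_add_distrib, ← mul_add, hJ, mul_zero, sum_const_zero]
  exact (nsmul_eq_zero_iff_right three_ne_zero).mp three_nsmul_eq_zero

/-- The 3-tensor `ε` with all its indices raised by the inverse metric `g`. -/
def raiseIndices (g : ι → ι → R) (ε : ι → ι → ι → R) (i j k : ι) : R :=
  ∑ a, ∑ b, ∑ c, g i a * g j b * g k c * ε a b c

theorem raiseIndices_rotate (g : ι → ι → R) {ε : ι → ι → ι → R}
    (hε : ∀ i j k, ε i j k = ε j k i) (i j k : ι) :
    raiseIndices g ε i j k = raiseIndices g ε j k i := by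
  unfold raiseIndices
  rw [← sum_comm_cycle]
  refine sum_congr rfl fun b _ => sum_congr rfl fun c _ => sum_congr rfl fun a _ => ?_
  rw [hε a b c]
  ring

/-- The trace of the 3-tensor `J` over its last two indices with respect to the inverse
metric `g`. -/
def lastTrace (g : ι → ι → R) (J : ι → ι → ι → R) (i : ι) : R :=
  ∑ j, ∑ k, g j k * J i j k

/-- The algebraic symmetries of a Cotton tensor, for a tensor `J` with lowered indices; `g` is the
inverse metric, which takes the trace. -/
structure IsCottonCandidate (g : ι → ι → R) (J : ι → ι → ι → R) : Prop where
  antisymm : ∀ i j k, J i j k = -J j i k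
  cyclic : ∀ i j k, J i j k + J j k i + J k i j = 0
  lastTrace_eq_zero : ∀ i, lastTrace g J i = 0

end Contraction

section LeftDual

variable {ι K : Type*} [Fintype ι] [Field K]

/-- The left dual `(⋆J)_{ij} = (1/2) ε_i{}^{kl} J_{klj}`, with the indices of `ε` raised by the
inverse metric `g`. -/
def leftDual (g : ι → ι → K) (ε J : ι → ι → ι → K) (i j : ι) : K :=
  (1 / 2) * ∑ k, ∑ l, ∑ a, ∑ b, g k a * g l b * ε i a b * J k l j

theorem trace_leftDual {g : ι → ι → K} {ε : ι → ι → ι → K} (J : ι → ι → ι → K)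
    (hg : ∀ i j, g i j = g j i) (hε : ∀ i j k, ε i j k = ε j k i) :
    ∑ i, ∑ j, g i j * leftDual g ε J i j =
      (1 / 2) * ∑ k, ∑ l, ∑ j, raiseIndices g ε k l j * J k l j := by
  have contract_epsilon (k l j : ι) :
      ∑ i, ∑ a, ∑ b, g i j * (g k a * g l b * ε i a b * J k l j) =
        raiseIndices g ε k l j * J k l j := by
    simp only [raiseIndices, sum_mul]
    rw [← sum_comm_cycle]
    refine sum_congr rfl fun a _ => sum_congr rfl fun b _ => sum_congr rfl fun i _ => ?_
    rw [hε i a b, hg i j]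
    ring
  calc
    ∑ i, ∑ j, g i j * leftDual g ε J i j
    _ = (1 / 2) * ∑ i, ∑ j, ∑ k, ∑ l, ∑ a, ∑ b,
          g i j * (g k a * g l b * ε i a b * J k l j) := by
      simp only [leftDual, mul_left_comm _ (1 / 2 : K), ← mul_sum]
    _ = (1 / 2) * ∑ k, ∑ l, ∑ j, ∑ i, ∑ a, ∑ b,
          g i j * (g k a * g l b * ε i a b * J k l j) := by
      rw [sum_comm_cycle]
      congr! 2 with k
      rw [sum_comm_cycle]
      exact sum_congr rfl fun _ _ => sum_comm
    _ = (1 / 2) * ∑ k, ∑ l, ∑ j, raiseIndices g ε k l j * J k l j := by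
      simp only [contract_epsilon]

theorem trace_leftDual_eq_zero [CharZero K] {g : ι → ι → K} {ε J : ι → ι → ι → K}
    (hg : ∀ i j, g i j = g j i) (hε : ∀ i j k, ε i j k = ε j k i)
    (hJ : ∀ i j k, J i j k + J j k i + J k i j = 0) :
    ∑ i, ∑ j, g i j * leftDual g ε J i j = 0 := by
  rw [trace_leftDual J hg hε, sum_mul_eq_zero_of_cyclic (raiseIndices_rotate g hε) hJ, mul_zero]

theorem leftDual_sub_swap [CharZero K] (g : Fin 3 → Fin 3 → K)
    {ε J : Fin 3 → Fin 3 → Fin 3 → K} (h₁ : ∀ i j k, ε i j k = -ε j i k)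
    (h₂ : ∀ i j k, ε i j k = -ε i k j) (hJ : ∀ i j k, J i j k = -J j i k) (i j : Fin 3) :
    leftDual g ε J i j - leftDual g ε J j i = ∑ k, ∑ a, ε j i a * g k a * lastTrace g J k := by
  have relabel :
      ∑ k, ∑ l, ∑ a, ∑ b, g k a * g l b * (ε j i b * J k l a) =
        -∑ k, ∑ l, ∑ a, ∑ b, g k a * g l b * (ε j i a * J k l b) := by
    rw [sum_comm]
    simp only [← sum_neg_distrib]
    refine sum_congr rfl fun k _ => sum_congr rfl fun l _ => ?_
    rw [sum_comm]
    refine sum_congr rfl fun a _ => sum_congr rfl fun b _ => ?_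
    rw [hJ l k b]
    ring
  calc
    leftDual g ε J i j - leftDual g ε J j i
    _ = (1 / 2) * ∑ k, ∑ l, ∑ a, ∑ b,
          g k a * g l b * (ε i a b * J k l j - ε j a b * J k l i) := by
      simp only [leftDual, ← mul_sub, ← sum_sub_distrib, mul_assoc]
    _ = (1 / 2) * ∑ k, ∑ l, ∑ a, ∑ b,
          g k a * g l b * (ε j i a * J k l b - ε j i b * J k l a) := by
      simp only [fun k l => schouten_identity h₁ h₂ (J k l) i j]
    _ = ∑ k, ∑ l, ∑ a, ∑ b, g k a * g l b * (ε j i a * J k l b) := by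
      simp only [mul_sub, sum_sub_distrib]
      rw [relabel]
      ring
    _ = ∑ k, ∑ a, ε j i a * g k a * lastTrace g J k := by
      refine sum_congr rfl fun k _ => ?_
      rw [sum_comm]
      simp only [lastTrace, mul_sum]
      refine sum_congr rfl fun a _ => sum_congr rfl fun l _ => sum_congr rfl fun b _ => ?_
      ring

theorem leftDual_symm [CharZero K] {g : Fin 3 → Fin 3 → K}
    {ε J : Fin 3 → Fin 3 → Fin 3 → K} (h₁ : ∀ i j k, ε i j k = -ε j i k)
    (h₂ : ∀ i j k, ε i j k = -ε i k j) (hJ : ∀ i j k, J i j k = -J j i k)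
    (htr : ∀ i, lastTrace g J i = 0) (i j : Fin 3) :
    leftDual g ε J i j = leftDual g ε J j i := by
  rw [← sub_eq_zero, leftDual_sub_swap g h₁ h₂ hJ]
  simp only [htr, mul_zero, sum_const_zero]

end LeftDual

theorem stmt_18_general {K : Type*} [Field K] [CharZero K] {g : Fin 3 → Fin 3 → K}
    {ε J : Fin 3 → Fin 3 → Fin 3 → K} (hg : ∀ i j, g i j = g j i)
    (h₁ : ∀ i j k, ε i j k = -ε j i k) (h₂ : ∀ i j k, ε i j k = -ε i k j)
    (hJ : IsCottonCandidate g J) :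
    (∀ i j, leftDual g ε J i j = leftDual g ε J j i) ∧
      ∑ i, ∑ j, g i j * leftDual g ε J i j = 0 :=
  ⟨leftDual_symm h₁ h₂ hJ.antisymm hJ.lastTrace_eq_zero,
    trace_leftDual_eq_zero hg (eq_rotate_of_antisymm h₁ h₂) hJ.cyclic⟩

theorem stmt_18
    (η : Fin 3 → Fin 3 → ℝ)
    (hη : ∀ i j, η i j = if i = j then (if i = 0 then (-1 : ℝ) else 1) else 0)
    (ε : Fin 3 → Fin 3 → Fin 3 → ℝ)
    (hε0 : ε 0 1 2 = 1)
    (hε1 : ∀ i j k, ε i j k = -ε j i k)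
    (hε2 : ∀ i j k, ε i j k = -ε i k j)
    (J : Fin 3 → Fin 3 → Fin 3 → ℝ)
    (hJ1 : ∀ i j k, J i j k = -J j i k)
    (hJ2 : ∀ i j k, J i j k + J j k i + J k i j = 0)
    (hJ3 : ∀ i, (∑ j, ∑ k, η j k * J i j k) = 0)
    (Y : Fin 3 → Fin 3 → ℝ)
    (hY : ∀ i j, Y i j =
      (1/2) * ∑ k, ∑ l, ∑ a, ∑ b, η k a * η l b * ε i a b * J k l j) :
    (∀ i j, Y i j = Y j i) ∧ (∑ i, ∑ j, η i j * Y i j) = 0 := by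
  obtain rfl : Y = leftDual η ε J := funext₂ hY
  have η_symm (i j : Fin 3) : η i j = η j i := by grind
  exact stmt_18_general η_symm hε1 hε2 ⟨hJ1, hJ2, hJ3⟩
end

section
/- Fix an integer n ≥ 3. On ℝ^{n+1} with indices in {0, 1, …, n}, let η be the Minkowski form with η₀₀ = −1, η_{αα} = 1 for 1 ≤ α ≤ n, and zero off-diagonal entries (its inverse η^{αβ} has the same entries); call indices in {0, …, n−1} tangential and let h denote the restriction of η to tangential indices. Let Q : {0,…,n}⁴ → ℝ satisfy: Q_{αβμν} = −Q_{βαμν}; Q_{αβμν} = −Q_{αβνμ}; Q_{αβμν} + Q_{αμνβ} + Q_{ανβμ} = 0; and Σ_{α,μ} η^{αμ} Q_{αβμν} = 0 for all β, ν. For tangential indices i, j, k, l define E_{ij} := Q_{n i n j}, M_{ijk} := Q_{n k i j}, and P_{ijkl} := Q_{ijkl} + (1/(n−2))·(h_{ik}E_{lj} − h_{il}E_{kj} − h_{jk}E_{li} + h_{jl}E_{ki}); extend E, M, P to all indices in {0,…,n} by setting them equal to 0 whenever one of their indices equals n. Then: (a) E is symmetric and Σ_{i,j} h^{ij} E_{ij}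 = 0; (b) M satisfies M_{ijk} = −M_{jik}, M_{ijk} + M_{jki} + M_{kij} = 0 and Σ_{j,k} h^{jk} M_{ijk} = 0; (c) P satisfies the same four conditions as Q with h in place of η; (d) for all α, β, μ, ρ ∈ {0,…,n}: Q_{αβμρ} = P_{αβμρ} + (ω_α M_{μρβ} − ω_β M_{μρα}) + (ω_μ M_{αβρ} − ω_ρ M_{αβμ}) − (1/(n−2))·(X_{αμ}E_{ρβ} − X_{αρ}E_{μβ} − X_{βμ}E_{ρα} + X_{βρ}E_{μα}), where ω_α := 1 if α = n and 0 otherwise, and X_{αβ} := η_{αβ} − (n−1)·ω_α·ω_β. -/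
/-!
Write `ω` for the covector dual to the normal basis vector `o`. Each term of the decomposition is
a Weyl candidate in its own right: the magnetic term because `M` is tangential and trace-free, and
the electric term because `X = g - g o o * (N - 2) * ω ⊗ ω`, with `N` the dimension, has trace `2`
and contracts as the identity with tangential tensors, so that its Kulkarni–Nomizu product with
`E` has trace `2 E - E - E = 0`. Hence the remainder of `Q` is a Weyl candidate too. It vanishes
when its first index is normal, so by pair symmetry it vanishes as soon as any index is normal, and
on tangential indices it is `P`.
-/

section Curvature

variable {ι K : Type*} [CommRing K]

/-- Algebraic curvature tensors, in covariant components: the symmetries of a Weyl candidate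
other than trace-freeness. -/
structure IsCurvatureLike (R : ι → ι → ι → ι → K) : Prop where
  antisymm_left : ∀ α β μ ν, R α β μ ν = -R β α μ ν
  antisymm_right : ∀ α β μ ν, R α β μ ν = -R α β ν μ
  bianchi : ∀ α β μ ν, R α β μ ν + R α μ ν β + R α ν β μ = 0

/-- The Kulkarni–Nomizu product of two symmetric `2`-tensors. The indices of the second factor are
ordered as in the decomposition formula for Weyl candidates. -/
def kulkarniNomizu (A B : ι → ι → K) (α β μ ρ : ι) : K :=
  A α μ * B ρ β - A α ρ * B μ β - A β μ * B ρ α + A β ρ * B μ α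

/-- The term `2 (ω_[α M_|μρ|β] + ω_[μ M_|αβ|ρ])` built from a covector and a Cotton candidate. -/
def covectorWedge (ω : ι → K) (M : ι → ι → ι → K) (α β μ ρ : ι) : K :=
  (ω α * M μ ρ β - ω β * M μ ρ α) + (ω μ * M α β ρ - ω ρ * M α β μ)

theorem isCurvatureLike_kulkarniNomizu {A B : ι → ι → K} (hA : ∀ α β, A α β = A β α)
    (hB : ∀ α β, B α β = B β α) : IsCurvatureLike (kulkarniNomizu A B) where
  antisymm_left α β μ ν := by simp only [kulkarniNomizu]; ring
  antisymm_right α β μ ν := by simp only [kulkarniNomizu]; ring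
  bianchi α β μ ν := by
    simp only [kulkarniNomizu]
    rw [hA μ β, hA ν β, hA ν μ, hB μ β, hB ν β, hB ν μ]
    ring

theorem isCurvatureLike_covectorWedge (ω : ι → K) {M : ι → ι → ι → K}
    (hM : ∀ α β γ, M α β γ = -M β α γ) (hcyc : ∀ α β γ, M α β γ + M β γ α + M γ α β = 0) :
    IsCurvatureLike (covectorWedge ω M) where
  antisymm_left α β μ ν := by
    simp only [covectorWedge]
    linear_combination ω μ * hM α β ν - ω ν * hM α β μ
  antisymm_right α β μ ν := by
    simp only [covectorWedge]
    linear_combination ω α * hM μ ν β - ω β * hM μ ν α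
  bianchi α β μ ν := by
    simp only [covectorWedge]
    linear_combination ω α * hcyc β μ ν - ω β * (hcyc α μ ν - hM ν α μ)
      - ω μ * (hcyc α ν β - hM β α ν) - ω ν * (hcyc α β μ - hM μ α β)

namespace IsCurvatureLike

variable {R S : ι → ι → ι → ι → K}

theorem sub (hR : IsCurvatureLike R) (hS : IsCurvatureLike S) :
    IsCurvatureLike fun α β μ ν ↦ R α β μ ν - S α β μ ν where
  antisymm_left α β μ ν := by
    linear_combination hR.antisymm_left α β μ ν - hS.antisymm_left α β μ ν
  antisymm_right α β μ ν := by
    linear_combination hR.antisymm_right α β μ ν - hS.antisymm_right α β μ ν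
  bianchi α β μ ν := by linear_combination hR.bianchi α β μ ν - hS.bianchi α β μ ν

theorem const_mul (hR : IsCurvatureLike R) (c : K) :
    IsCurvatureLike fun α β μ ν ↦ c * R α β μ ν where
  antisymm_left α β μ ν := by linear_combination c * hR.antisymm_left α β μ ν
  antisymm_right α β μ ν := by linear_combination c * hR.antisymm_right α β μ ν
  bianchi α β μ ν := by linear_combination c * hR.bianchi α β μ ν

theorem swap_both (hR : IsCurvatureLike R) (α β μ ν : ι) : R α β μ ν = R β α ν μ := by
  rw [hR.antisymm_left, hR.antisymm_right, neg_neg]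

variable [NoZeroDivisors K] [NeZero (2 : K)]

theorem pair_symm (hR : IsCurvatureLike R) (α β μ ν : ι) : R α β μ ν = R μ ν α β := by
  have htwo : 2 * R α β μ ν = 2 * R μ ν α β := by
    -- the alternating sum of the Bianchi identities led by each of the four indices
    linear_combination
      hR.bianchi α β μ ν - hR.bianchi β μ ν α - hR.bianchi μ ν α β + hR.bianchi ν α β μ
      + hR.antisymm_left α β μ ν - hR.antisymm_left μ ν α β - hR.antisymm_left α ν β μ
      + hR.antisymm_left β μ ν α + hR.antisymm_left μ α β ν - hR.antisymm_right α μ ν β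
      + hR.antisymm_left β ν α μ - hR.antisymm_right ν β α μ
  exact mul_left_cancel₀ two_ne_zero htwo

theorem self_left (hR : IsCurvatureLike R) (α μ ν : ι) : R α α μ ν = 0 := by
  have htwo : 2 * R α α μ ν = 0 := by linear_combination hR.antisymm_left α α μ ν
  exact (mul_eq_zero.mp htwo).resolve_left two_ne_zero

theorem self_right (hR : IsCurvatureLike R) (α β μ : ι) : R α β μ μ = 0 := by
  rw [hR.pair_symm, hR.self_left]

theorem eq_zero_of_index_eq (hR : IsCurvatureLike R) {o : ι} (ho : ∀ β μ ν, R o β μ ν = 0)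
    {α β μ ν : ι} (h : α = o ∨ β = o ∨ μ = o ∨ ν = o) : R α β μ ν = 0 := by
  rcases h with rfl | rfl | rfl | rfl
  · exact ho β μ ν
  · rw [hR.antisymm_left, ho, neg_zero]
  · rw [hR.pair_symm, ho]
  · rw [hR.pair_symm, hR.antisymm_left, ho, neg_zero]

end IsCurvatureLike

end Curvature

section Conormal

variable {ι K : Type*} [DecidableEq ι] [CommRing K]

/-- The covector dual to the basis vector `o`. -/
def normalCovector (o α : ι) : K :=
  if α = o then 1 else 0

@[simp]
theorem normalCovector_self (o : ι) : normalCovector o o = (1 : K) :=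
  if_pos rfl

theorem normalCovector_of_ne {o α : ι} (h : α ≠ o) : normalCovector o α = (0 : K) :=
  if_neg h

end Conormal

section Trace

variable {ι K : Type*} [Fintype ι] [DecidableEq ι] [CommRing K] {g : Matrix ι ι K}

/-- `g` is the Gram matrix of a nondegenerate symmetric bilinear form in a basis whose vector `o`
is orthogonal to all others: the basis is adapted to the hyperplane normal to `o`, which is then
non-null. -/
structure IsAdaptedMetric (g : Matrix ι ι K) (o : ι) : Prop where
  isSymm : g.IsSymm
  isUnit_det : IsUnit g.det
  normal : ∀ i, i ≠ o → g o i = 0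

/-- The trace of a covariant `2`-tensor with respect to `g`. It agrees with the trace over the
hyperplane for tensors that vanish on normal indices. -/
noncomputable def metricTrace (g : Matrix ι ι K) (A : ι → ι → K) : K :=
  ∑ α, ∑ μ, g⁻¹ α μ * A α μ

/-- The tensor `X` of the electric term, for the normal `o` of arbitrary nonzero square `g o o`. -/
def adjustedMetric (g : Matrix ι ι K) (o α β : ι) : K :=
  g α β - g o o * ((Fintype.card ι : K) - 2) * normalCovector o α * normalCovector o β

/-- Weyl candidates: algebraic curvature tensors that are trace-free with respect to `g`. -/
structure IsWeylCandidate (g : Matrix ι ι K) (Q : ι → ι → ι → ι → K) : Prop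
    extends IsCurvatureLike Q where
  trace : ∀ β ν, metricTrace g (fun α μ ↦ Q α β μ ν) = 0

/-- Cotton candidates: the algebraic properties of a Cotton tensor with respect to `g`. -/
structure IsCottonCandidate_s19 (g : Matrix ι ι K) (M : ι → ι → ι → K) : Prop where
  antisymm : ∀ α β γ, M α β γ = -M β α γ
  cyclic : ∀ α β γ, M α β γ + M β γ α + M γ α β = 0
  trace : ∀ α, metricTrace g (M α) = 0

theorem metricTrace_add (g : Matrix ι ι K) (A B : ι → ι → K) :
    metricTrace g (fun α μ ↦ A α μ + B α μ) = metricTrace g A + metricTrace g B := by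
  simp only [metricTrace, mul_add, Finset.sum_add_distrib]

theorem metricTrace_sub (g : Matrix ι ι K) (A B : ι → ι → K) :
    metricTrace g (fun α μ ↦ A α μ - B α μ) = metricTrace g A - metricTrace g B := by
  simp only [metricTrace, mul_sub, Finset.sum_sub_distrib]

theorem metricTrace_const_mul (g : Matrix ι ι K) (c : K) (A : ι → ι → K) :
    metricTrace g (fun α μ ↦ c * A α μ) = c * metricTrace g A := by
  simp only [metricTrace, mul_left_comm _ c, Finset.mul_sum]

theorem metricTrace_swap (hg : g.IsSymm) (A : ι → ι → K) :
    metricTrace g (fun α μ ↦ A μ α) = metricTrace g A := by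
  rw [metricTrace, Finset.sum_comm]
  simp only [metricTrace, hg.inv.apply]

theorem metricTrace_metric_mul (hg : g.IsSymm) (hdet : IsUnit g.det) (ρ : ι) (v : ι → K) :
    metricTrace g (fun α μ ↦ g α ρ * v μ) = v ρ := by
  have hinv (μ : ι) : ∑ α, g⁻¹ α μ * g α ρ = (1 : Matrix ι ι K) μ ρ := by
    simp only [← Matrix.nonsing_inv_mul g hdet, Matrix.mul_apply, hg.inv.apply]
  rw [metricTrace, Finset.sum_comm]
  simp only [← mul_assoc, ← Finset.sum_mul, hinv, Matrix.one_apply, ite_mul, one_mul, zero_mul,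
    Finset.sum_ite_eq', Finset.mem_univ, if_true]

theorem metricTrace_self (hg : g.IsSymm) (hdet : IsUnit g.det) :
    metricTrace g g = Fintype.card ι := by
  have hinv (α : ι) : ∑ μ, g⁻¹ α μ * g α μ = 1 := by
    simp_rw [← hg.apply α]
    rw [← Matrix.mul_apply, Matrix.nonsing_inv_mul g hdet, Matrix.one_apply_eq]
  simp only [metricTrace, hinv, Finset.sum_const, Finset.card_univ, nsmul_eq_mul, mul_one]

theorem adjustedMetric_symm (hg : g.IsSymm) (o α β : ι) :
    adjustedMetric g o α β = adjustedMetric g o β α := by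
  simp only [adjustedMetric, hg.apply α β]
  ring

namespace IsWeylCandidate

variable {Q R : ι → ι → ι → ι → K}

theorem sub (hQ : IsWeylCandidate g Q) (hR : IsWeylCandidate g R) :
    IsWeylCandidate g fun α β μ ν ↦ Q α β μ ν - R α β μ ν where
  toIsCurvatureLike := hQ.toIsCurvatureLike.sub hR.toIsCurvatureLike
  trace β ν := by rw [metricTrace_sub, hQ.trace, hR.trace, sub_zero]

theorem const_mul (hQ : IsWeylCandidate g Q) (c : K) :
    IsWeylCandidate g fun α β μ ν ↦ c * Q α β μ ν where
  toIsCurvatureLike := hQ.toIsCurvatureLike.const_mul c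
  trace β ν := by rw [metricTrace_const_mul, hQ.trace, mul_zero]

end IsWeylCandidate

end Trace

section AdaptedMetric

variable {ι K : Type*} [Fintype ι] [DecidableEq ι] [Field K] {g : Matrix ι ι K} {o : ι}

namespace IsAdaptedMetric

theorem normal_self_mul_inv (hg : IsAdaptedMetric g o) (μ : ι) :
    g o o * g⁻¹ o μ = normalCovector o μ := by
  have hrow : g o o * g⁻¹ o μ = (g * g⁻¹) o μ := by
    rw [Matrix.mul_apply, Finset.sum_eq_single_of_mem o (Finset.mem_univ o)]
    intro i _ hi
    rw [hg.normal i hi, zero_mul]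
  rw [hrow, Matrix.mul_nonsing_inv g hg.isUnit_det, Matrix.one_apply]
  simp only [normalCovector, eq_comm]

theorem normal_self_ne_zero (hg : IsAdaptedMetric g o) : g o o ≠ 0 := by
  intro h
  simpa [h] using hg.normal_self_mul_inv o

theorem apply_normal (hg : IsAdaptedMetric g o) (μ : ι) :
    g o μ = g o o * normalCovector o μ := by
  by_cases h : μ = o
  · simp [h]
  · simp [normalCovector_of_ne h, hg.normal μ h]

theorem metricTrace_normalCovector_mul (hg : IsAdaptedMetric g o) (v : ι → K) :
    metricTrace g (fun α μ ↦ normalCovector o α * v μ) = v o / g o o := by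
  have hinv (μ : ι) : g⁻¹ o μ = normalCovector o μ / g o o := by
    rw [← hg.normal_self_mul_inv, mul_div_cancel_left₀ _ hg.normal_self_ne_zero]
  simp [metricTrace, normalCovector, hinv, div_mul_eq_mul_div, ← Finset.sum_div]

theorem adjustedMetric_normal (hg : IsAdaptedMetric g o) (μ : ι) :
    adjustedMetric g o o μ = -(g o o * ((Fintype.card ι : K) - 3)) * normalCovector o μ := by
  rw [adjustedMetric, hg.apply_normal, normalCovector_self]
  ring

theorem metricTrace_adjustedMetric_mul (hg : IsAdaptedMetric g o) (ρ : ι) {v : ι → K}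
    (hv : v o = 0) : metricTrace g (fun α μ ↦ adjustedMetric g o α ρ * v μ) = v ρ := by
  have hsplit (α μ : ι) : adjustedMetric g o α ρ * v μ = g α ρ * v μ -
      g o o * ((Fintype.card ι : K) - 2) * normalCovector o ρ * (normalCovector o α * v μ) := by
    rw [adjustedMetric]
    ring
  simp only [hsplit, metricTrace_sub, metricTrace_const_mul,
    metricTrace_metric_mul hg.isSymm hg.isUnit_det, hg.metricTrace_normalCovector_mul, hv,
    zero_div, mul_zero, sub_zero]

theorem metricTrace_adjustedMetric (hg : IsAdaptedMetric g o) :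
    metricTrace g (adjustedMetric g o) = 2 := by
  have hsplit : metricTrace g (adjustedMetric g o) = metricTrace g g - metricTrace g (fun α μ ↦
      g o o * ((Fintype.card ι : K) - 2) * (normalCovector o α * normalCovector o μ)) := by
    simp only [metricTrace, adjustedMetric, mul_sub, Finset.sum_sub_distrib, mul_assoc]
  rw [hsplit, metricTrace_const_mul, metricTrace_self hg.isSymm hg.isUnit_det,
    hg.metricTrace_normalCovector_mul, normalCovector_self]
  field_simp [hg.normal_self_ne_zero]
  ring

theorem isWeylCandidate_kulkarniNomizu (hg : IsAdaptedMetric g o)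
    {E : ι → ι → K} (hE : ∀ α β, E α β = E β α) (hnormal : ∀ β, E o β = 0)
    (htrace : metricTrace g E = 0) :
    IsWeylCandidate g (kulkarniNomizu (adjustedMetric g o) E) where
  toIsCurvatureLike := isCurvatureLike_kulkarniNomizu (adjustedMetric_symm hg.isSymm o) hE
  trace β ρ := by
    have hX_trace : metricTrace g (fun α μ ↦ adjustedMetric g o α μ * E ρ β) = 2 * E ρ β := by
      simp only [mul_comm _ (E ρ β), metricTrace_const_mul, hg.metricTrace_adjustedMetric]
    have hX_left : metricTrace g (fun α μ ↦ adjustedMetric g o α ρ * E μ β) = E ρ β :=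
      hg.metricTrace_adjustedMetric_mul ρ (hnormal β)
    have hX_right : metricTrace g (fun α μ ↦ adjustedMetric g o β μ * E ρ α) = E ρ β := by
      rw [metricTrace_swap hg.isSymm fun α μ ↦ adjustedMetric g o β α * E ρ μ]
      simp only [adjustedMetric_symm hg.isSymm o β]
      exact hg.metricTrace_adjustedMetric_mul β ((hE ρ o).trans (hnormal ρ))
    have hE_trace : metricTrace g (fun α μ ↦ adjustedMetric g o β ρ * E μ α) = 0 := by
      rw [metricTrace_const_mul, metricTrace_swap hg.isSymm E, htrace, mul_zero]
    simp only [kulkarniNomizu, metricTrace_add, metricTrace_sub, hX_trace, hX_left,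
      hX_right, hE_trace]
    ring

theorem isWeylCandidate_covectorWedge (hg : IsAdaptedMetric g o)
    {M : ι → ι → ι → K} (hM : IsCottonCandidate_s19 g M) (hnormal : ∀ β γ, M o β γ = 0) :
    IsWeylCandidate g (covectorWedge (normalCovector o) M) where
  toIsCurvatureLike := isCurvatureLike_covectorWedge _ hM.antisymm hM.cyclic
  trace β ρ := by
    have hω_left : metricTrace g (fun α μ ↦ normalCovector o α * M μ ρ β) = 0 := by
      rw [hg.metricTrace_normalCovector_mul fun μ ↦ M μ ρ β, hnormal, zero_div]
    have hω_right : metricTrace g (fun α μ ↦ normalCovector o μ * M α β ρ) = 0 := by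
      rw [metricTrace_swap hg.isSymm fun α μ ↦ normalCovector o α * M μ β ρ,
        hg.metricTrace_normalCovector_mul fun μ ↦ M μ β ρ, hnormal, zero_div]
    have hM_trace (γ : ι) : metricTrace g (fun α μ ↦ M α γ μ) = 0 := by
      simp only [hM.antisymm _ γ, ← neg_one_mul (M γ _ _), metricTrace_const_mul]
      rw [hM.trace, mul_zero]
    have hM_trace_swap (γ : ι) : metricTrace g (fun α μ ↦ M μ γ α) = 0 :=
      (metricTrace_swap hg.isSymm fun α μ ↦ M α γ μ).trans (hM_trace γ)
    simp only [covectorWedge, metricTrace_add, metricTrace_sub, metricTrace_const_mul, hω_left,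
      hω_right, hM_trace, hM_trace_swap]
    ring

end IsAdaptedMetric

end AdaptedMetric

section Decomposition

variable {ι K : Type*} [DecidableEq ι]

section Parts

variable [Zero K]

/-- The electric part `E` of `Q` with respect to the normal `o`, extended by zero to normal
indices. -/
def electricPart (o : ι) (Q : ι → ι → ι → ι → K) (α β : ι) : K :=
  if α ≠ o ∧ β ≠ o then Q o α o β else 0

/-- The magnetic part `M` of `Q` with respect to the normal `o`, extended by zero to normal
indices. -/
def magneticPart (o : ι) (Q : ι → ι → ι → ι → K) (α β γ : ι) : K :=
  if α ≠ o ∧ β ≠ o ∧ γ ≠ o then Q o γ α β else 0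

theorem magneticPart_normal (o : ι) (Q : ι → ι → ι → ι → K) (β γ : ι) :
    magneticPart o Q o β γ = 0 := by
  simp [magneticPart]

end Parts

section Symmetries

variable [CommRing K] [NoZeroDivisors K] [NeZero (2 : K)] {o : ι} {Q : ι → ι → ι → ι → K}

theorem IsCurvatureLike.electricPart_eq (hQ : IsCurvatureLike Q) (α β : ι) :
    electricPart o Q α β = Q o α o β := by
  rw [electricPart, ite_eq_left_iff, not_and_or, not_not, not_not]
  rintro (rfl | rfl)
  · rw [hQ.self_left]
  · rw [hQ.self_right]

theorem IsCurvatureLike.electricPart_symm (hQ : IsCurvatureLike Q) (α β : ι) :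
    electricPart o Q α β = electricPart o Q β α := by
  rw [hQ.electricPart_eq, hQ.electricPart_eq, hQ.pair_symm]

theorem IsCurvatureLike.magneticPart_eq (hQ : IsCurvatureLike Q) (α β γ : ι) :
    magneticPart o Q α β γ = Q o γ α β - normalCovector o α * electricPart o Q γ β
      + normalCovector o β * electricPart o Q γ α := by
  rw [hQ.electricPart_eq, hQ.electricPart_eq, magneticPart]
  by_cases hα : α = o <;> by_cases hβ : β = o <;> by_cases hγ : γ = o <;>
    simp [hα, hβ, hγ, normalCovector, hQ.self_left, hQ.self_right, hQ.antisymm_right o γ α o]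

end Symmetries

variable [Fintype ι] [Field K] {g : Matrix ι ι K} {o : ι} {Q : ι → ι → ι → ι → K}

/-- The coefficient of the electric term, `ε / (n - 2)` for a normal with `g o o = ε = ± 1` in
dimension `n + 1`. -/
def electricCoefficient (g : Matrix ι ι K) (o : ι) : K :=
  1 / (g o o * ((Fintype.card ι : K) - 3))

/-- The tangential Weyl candidate `P` of `Q`, extended by zero to normal indices. -/
def tangentialPart (g : Matrix ι ι K) (o : ι) (Q : ι → ι → ι → ι → K) (α β γ δ : ι) : K :=
  if α ≠ o ∧ β ≠ o ∧ γ ≠ o ∧ δ ≠ o then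
    Q α β γ δ + electricCoefficient g o * kulkarniNomizu g (electricPart o Q) α β γ δ
  else 0

/-- What remains of `Q` after removing the magnetic and electric terms of its decomposition. It
turns out to be `tangentialPart g o Q`. -/
def weylRemainder (g : Matrix ι ι K) (o : ι) (Q : ι → ι → ι → ι → K) (α β μ ρ : ι) : K :=
  Q α β μ ρ - (covectorWedge (normalCovector o) (magneticPart o Q) α β μ ρ
    - electricCoefficient g o *
      kulkarniNomizu (adjustedMetric g o) (electricPart o Q) α β μ ρ)

theorem weylRemainder_of_tangential {α β μ ρ : ι} (hα : α ≠ o) (hβ : β ≠ o) (hμ : μ ≠ o)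
    (hρ : ρ ≠ o) : weylRemainder g o Q α β μ ρ = tangentialPart g o Q α β μ ρ := by
  simp [weylRemainder, tangentialPart, covectorWedge, kulkarniNomizu, adjustedMetric,
    normalCovector_of_ne, hα, hβ, hμ, hρ]

variable [NeZero (2 : K)]

theorem IsWeylCandidate.metricTrace_electricPart (hQ : IsWeylCandidate g Q) :
    metricTrace g (electricPart o Q) = 0 := by
  rw [← hQ.trace o o]
  congr 1
  funext α β
  rw [hQ.electricPart_eq, hQ.swap_both]

theorem IsWeylCandidate.isCottonCandidate_magneticPart (hg : IsAdaptedMetric g o)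
    (hQ : IsWeylCandidate g Q) : IsCottonCandidate_s19 g (magneticPart o Q) where
  antisymm α β γ := by
    rw [hQ.magneticPart_eq, hQ.magneticPart_eq, hQ.antisymm_right]
    ring
  cyclic α β γ := by
    simp only [hQ.magneticPart_eq, hQ.electricPart_symm β α, hQ.electricPart_symm γ α,
      hQ.electricPart_symm γ β]
    linear_combination hQ.bianchi o α β γ
  trace α := by
    have hcurv : metricTrace g (fun β γ ↦ Q o γ α β) = 0 := by
      simp only [hQ.swap_both o _ α]
      rw [metricTrace_swap hg.isSymm fun γ β ↦ Q γ o β α, hQ.trace]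
    have hnormal : metricTrace g (fun β γ ↦ normalCovector o β * electricPart o Q γ α) = 0 := by
      rw [hg.metricTrace_normalCovector_mul fun γ ↦ electricPart o Q γ α, hQ.electricPart_eq,
        hQ.self_left, zero_div]
    have hsplit : magneticPart o Q α = fun β γ ↦ Q o γ α β
        - normalCovector o α * electricPart o Q γ β
        + normalCovector o β * electricPart o Q γ α :=
      funext₂ (hQ.magneticPart_eq α)
    rw [hsplit, metricTrace_add, metricTrace_sub, metricTrace_const_mul,
      metricTrace_swap hg.isSymm (electricPart o Q), hQ.metricTrace_electricPart, hcurv, hnormal]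
    ring

theorem IsWeylCandidate.isWeylCandidate_weylRemainder (hg : IsAdaptedMetric g o)
    (hQ : IsWeylCandidate g Q) : IsWeylCandidate g (weylRemainder g o Q) := by
  have hmagnetic := hg.isWeylCandidate_covectorWedge (hQ.isCottonCandidate_magneticPart hg)
    (magneticPart_normal o Q)
  have helectric := hg.isWeylCandidate_kulkarniNomizu hQ.electricPart_symm
    (fun β ↦ by rw [hQ.electricPart_eq, hQ.self_left]) (hQ.metricTrace_electricPart (o := o))
  exact hQ.sub (hmagnetic.sub (helectric.const_mul _))

theorem IsCurvatureLike.weylRemainder_normal (hg : IsAdaptedMetric g o)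
    (hdim : (Fintype.card ι : K) ≠ 3) (hQ : IsCurvatureLike Q) (β μ ρ : ι) :
    weylRemainder g o Q o β μ ρ = 0 := by
  have hE (α : ι) : electricPart o Q α o = 0 := by simp [electricPart]
  have hM (α β : ι) : magneticPart o Q α β o = 0 := by simp [magneticPart]
  have hnormal := hg.normal_self_ne_zero
  have hdim' := sub_ne_zero.mpr hdim
  simp only [weylRemainder, electricCoefficient, covectorWedge, kulkarniNomizu, hE, hM,
    magneticPart_normal, normalCovector_self, hg.adjustedMetric_normal, hQ.magneticPart_eq,
    hQ.electricPart_symm β]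
  field_simp
  ring

theorem IsWeylCandidate.weylRemainder_eq_tangentialPart (hg : IsAdaptedMetric g o)
    (hdim : (Fintype.card ι : K) ≠ 3) (hQ : IsWeylCandidate g Q) :
    weylRemainder g o Q = tangentialPart g o Q := by
  funext α β μ ρ
  by_cases h : α ≠ o ∧ β ≠ o ∧ μ ≠ o ∧ ρ ≠ o
  · obtain ⟨hα, hβ, hμ, hρ⟩ := h
    exact weylRemainder_of_tangential hα hβ hμ hρ
  · rw [tangentialPart, if_neg h]
    exact (hQ.isWeylCandidate_weylRemainder hg).eq_zero_of_index_eq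
      (hQ.weylRemainder_normal hg hdim) (by tauto)

theorem stmt_19_general (hg : IsAdaptedMetric g o) (hdim : (Fintype.card ι : K) ≠ 3)
    (hQ : IsWeylCandidate g Q) :
    ((∀ α β, electricPart o Q α β = electricPart o Q β α) ∧
      metricTrace g (electricPart o Q) = 0) ∧
    IsCottonCandidate_s19 g (magneticPart o Q) ∧
    IsWeylCandidate g (tangentialPart g o Q) ∧
    ∀ α β μ ρ, Q α β μ ρ = tangentialPart g o Q α β μ ρ
      + covectorWedge (normalCovector o) (magneticPart o Q) α β μ ρ
      - electricCoefficient g o *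
        kulkarniNomizu (adjustedMetric g o) (electricPart o Q) α β μ ρ := by
  have hP := hQ.weylRemainder_eq_tangentialPart hg hdim
  refine ⟨⟨hQ.electricPart_symm, hQ.metricTrace_electricPart⟩,
    hQ.isCottonCandidate_magneticPart hg, hP ▸ hQ.isWeylCandidate_weylRemainder hg, ?_⟩
  intro α β μ ρ
  rw [← hP, weylRemainder]
  ring

end Decomposition

section Minkowski

/-- The Minkowski form on `ℝ^{n+1}`, with the timelike direction first. -/
def minkowski (n : ℕ) : Matrix (Fin (n + 1)) (Fin (n + 1)) ℝ :=
  Matrix.diagonal fun α ↦ if α = 0 then -1 else 1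

theorem minkowski_mul_self (n : ℕ) : minkowski n * minkowski n = 1 := by
  rw [minkowski, Matrix.diagonal_mul_diagonal, ← Matrix.diagonal_one]
  congr 1
  funext α
  split_ifs <;> norm_num

theorem minkowski_inv (n : ℕ) : (minkowski n)⁻¹ = minkowski n :=
  Matrix.inv_eq_left_inv (minkowski_mul_self n)

theorem isAdaptedMetric_minkowski (n : ℕ) (o : Fin (n + 1)) :
    IsAdaptedMetric (minkowski n) o where
  isSymm := Matrix.isSymm_diagonal _
  isUnit_det := Matrix.isUnit_det_of_left_inverse (minkowski_mul_self n)
  normal _ hi := Matrix.diagonal_apply_ne _ hi.symm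

theorem minkowski_last {n : ℕ} (hn : n ≠ 0) : minkowski n (Fin.last n) (Fin.last n) = 1 := by
  simp [minkowski, Fin.last_eq_zero_iff, hn]

theorem adjustedMetric_minkowski {n : ℕ} (hn : n ≠ 0) (α β : Fin (n + 1)) :
    adjustedMetric (minkowski n) (Fin.last n) α β = minkowski n α β -
      ((n : ℝ) - 1) * normalCovector (Fin.last n) α * normalCovector (Fin.last n) β := by
  rw [adjustedMetric, minkowski_last hn, Fintype.card_fin]
  push_cast
  ring

theorem electricCoefficient_minkowski {n : ℕ} (hn : n ≠ 0) :
    electricCoefficient (minkowski n) (Fin.last n) = 1 / ((n : ℝ) - 2) := by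
  rw [electricCoefficient, minkowski_last hn, Fintype.card_fin, one_mul]
  congr 1
  push_cast
  ring

theorem metricTrace_minkowski_eq_sum_castSucc {n : ℕ} {A : Fin (n + 1) → Fin (n + 1) → ℝ}
    (hleft : ∀ β, A (Fin.last n) β = 0) (hright : ∀ α, A α (Fin.last n) = 0) :
    metricTrace (minkowski n) A =
      ∑ i : Fin n, ∑ j : Fin n,
        minkowski n i.castSucc j.castSucc * A i.castSucc j.castSucc := by
  simp only [metricTrace, minkowski_inv, Fin.sum_univ_castSucc, hleft, hright, mul_zero,
    Finset.sum_const_zero, add_zero]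

end Minkowski

theorem stmt_19 (n : ℕ) (hn : 3 ≤ n)
    (η : Fin (n+1) → Fin (n+1) → ℝ)
    (hη : ∀ α β, η α β = if α = β then (if α = 0 then (-1 : ℝ) else 1) else 0)
    (Q : Fin (n+1) → Fin (n+1) → Fin (n+1) → Fin (n+1) → ℝ)
    (hQ1 : ∀ α β μ ν, Q α β μ ν = -Q β α μ ν)
    (hQ2 : ∀ α β μ ν, Q α β μ ν = -Q α β ν μ)
    (hQ3 : ∀ α β μ ν, Q α β μ ν + Q α μ ν β + Q α ν β μ = 0)
    (hQ4 : ∀ β ν, (∑ α, ∑ μ, η α μ * Q α β μ ν) = 0)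
    (E : Fin (n+1) → Fin (n+1) → ℝ)
    (hE : ∀ α β, E α β =
      if α ≠ Fin.last n ∧ β ≠ Fin.last n then Q (Fin.last n) α (Fin.last n) β else 0)
    (M : Fin (n+1) → Fin (n+1) → Fin (n+1) → ℝ)
    (hM : ∀ α β γ, M α β γ =
      if α ≠ Fin.last n ∧ β ≠ Fin.last n ∧ γ ≠ Fin.last n then Q (Fin.last n) γ α β else 0)
    (P : Fin (n+1) → Fin (n+1) → Fin (n+1) → Fin (n+1) → ℝ)
    (hP : ∀ α β γ δ, P α β γ δ =
      if α ≠ Fin.last n ∧ β ≠ Fin.last n ∧ γ ≠ Fin.last n ∧ δ ≠ Fin.last n then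
        Q α β γ δ + (1/((n : ℝ) - 2)) *
          (η α γ * E δ β - η α δ * E γ β - η β γ * E δ α + η β δ * E γ α)
      else 0)
    (ω : Fin (n+1) → ℝ) (hω : ∀ α, ω α = if α = Fin.last n then 1 else 0)
    (X : Fin (n+1) → Fin (n+1) → ℝ)
    (hX : ∀ α β, X α β = η α β - ((n : ℝ) - 1) * ω α * ω β) :
    ((∀ α β, E α β = E β α) ∧
      (∑ i : Fin n, ∑ j : Fin n,
        η i.castSucc j.castSucc * E i.castSucc j.castSucc) = 0) ∧
    ((∀ α β γ, M α β γ = -M β α γ) ∧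
      (∀ α β γ, M α β γ + M β γ α + M γ α β = 0) ∧
      (∀ α, (∑ j : Fin n, ∑ k : Fin n,
        η j.castSucc k.castSucc * M α j.castSucc k.castSucc) = 0)) ∧
    ((∀ α β γ δ, P α β γ δ = -P β α γ δ) ∧
      (∀ α β γ δ, P α β γ δ = -P α β δ γ) ∧
      (∀ α β γ δ, P α β γ δ + P α γ δ β + P α δ β γ = 0) ∧
      (∀ β δ, (∑ i : Fin n, ∑ k : Fin n,
        η i.castSucc k.castSucc * P i.castSucc β k.castSucc δ) = 0)) ∧
    (∀ α β μ ρ, Q α β μ ρ = P α β μ ρ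
        + (ω α * M μ ρ β - ω β * M μ ρ α) + (ω μ * M α β ρ - ω ρ * M α β μ)
        - (1/((n : ℝ) - 2)) *
            (X α μ * E ρ β - X α ρ * E μ β - X β μ * E ρ α + X β ρ * E μ α)) := by
  obtain rfl : η = minkowski n := funext₂ hη
  obtain rfl : E = electricPart (Fin.last n) Q := funext₂ hE
  obtain rfl : M = magneticPart (Fin.last n) Q := funext₃ hM
  obtain rfl : ω = normalCovector (Fin.last n) := funext hω
  have hn₀ : n ≠ 0 := by lia
  have hcoeff := electricCoefficient_minkowski hn₀
  obtain rfl : X = adjustedMetric (minkowski n) (Fin.last n) :=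
    funext₂ fun α β ↦ (hX α β).trans (adjustedMetric_minkowski hn₀ α β).symm
  obtain rfl : P = tangentialPart (minkowski n) (Fin.last n) Q := by
    funext α β γ δ
    simp only [hP, tangentialPart, hcoeff, kulkarniNomizu]
  have hdim : (Fintype.card (Fin (n + 1)) : ℝ) ≠ 3 := by
    exact_mod_cast show Fintype.card (Fin (n + 1)) ≠ 3 by rw [Fintype.card_fin]; lia
  have hQ : IsWeylCandidate (minkowski n) Q :=
    ⟨⟨hQ1, hQ2, hQ3⟩, by simpa only [metricTrace, minkowski_inv] using hQ4⟩
  obtain ⟨⟨hEsymm, hEtrace⟩, hMcotton, hPweyl, hdecomp⟩ :=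
    stmt_19_general (isAdaptedMetric_minkowski n (Fin.last n)) hdim hQ
  refine ⟨⟨hEsymm, ?_⟩, ⟨hMcotton.antisymm, hMcotton.cyclic, fun α ↦ ?_⟩,
    ⟨hPweyl.antisymm_left, hPweyl.antisymm_right, hPweyl.bianchi, fun β δ ↦ ?_⟩,
    fun α β μ ρ ↦ ?_⟩
  · rw [← hEtrace, metricTrace_minkowski_eq_sum_castSucc] <;> simp [electricPart]
  · rw [← hMcotton.trace α, metricTrace_minkowski_eq_sum_castSucc] <;> simp [magneticPart]
  · rw [← hPweyl.trace β δ, metricTrace_minkowski_eq_sum_castSucc] <;> simp [tangentialPart]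
  · rw [hdecomp, hcoeff, covectorWedge, kulkarniNomizu, add_assoc]
end
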